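/- arXiv:1708.08592 — 5 statements merged into one kernel-verified Lean document; each statement's English description precedes it below -/
import Mathlib

section
/- Let V be a stationary {0,1}-valued process as in the context which regenerates in the state 1, with μ(A_0) > 0. Fix n ≥ 1. For a subset I ⊆ {1,...,n−1} with elements i^I_1 < i^I_2 < ... < i^I_{|I|}, set i^I_0 = 0 and i^I_{|I|+1} = n. Then μ(A_0 ∩ (⋂_{k=1}^{n−1} A_kᶜ) ∩ A_n) = μ(A_0) · ∑_{I ⊆ {1,...,n−1}} (−1)^{|I|} ∏_{k=0}^{|I|} q_{i^I_{k+1} − i^I_k}, where the sum includes the summand for I = ∅. Equivalently, the interarrival probability p_n = P(V_n = 1 and V_k = 0 for all 0 < k < n | V_0 = 1) equals ∑_{I ⊆ {1,...,n−1}} (−1)^{|I|} ∏_{k=0}^{|I|} q_{i^I_{k+1} − i^I_k}. -/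
open MeasureTheory

/-- Given `q : ℤ → ℝ` and a list `[x₀, x₁, …, x_m]`, this is the product
`∏_{k=0}^{m-1} q (x_{k+1} - x_k)` over consecutive differences. -/
def chainProd (q : ℤ → ℝ) : List ℤ → ℝ
  | [] => 1
  | [_] => 1
  | x :: y :: l => q (y - x) * chainProd q (y :: l)

/-!
By inclusion-exclusion over the times at which the process is prevented from visiting `1`,
the probability of avoiding `1` strictly between `0` and `n` is an alternating sum of the
probabilities that `1` is visited at `0`, at `n` and at every time of a finite set `I` in between.
Each visit to `1` erases the past, so such a probability is the probability of the first visit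
times the product of the transition probabilities over the successive gaps.

Regeneration is assumed for full cylinders of the future after a visit; summing it over all the
cylinders with a prescribed `1` at a single coordinate gives what is needed, namely regeneration
for one future visit.
-/

section Measure

variable {Ω ι : Type*}

/-- The atom with sign pattern `a` of the partition generated by the sets `C k`: the points that
lie in `C k` exactly for those `k` with `a k = true`. For `C k = {V (x + k + 1) = 1}` these are
the cylinder events of the future of a process `V` after time `x`. -/
def signAtom (C : ι → Set Ω) (a : ι → Bool) : Set Ω :=
  ⋂ k, if a k then C k else (C k)ᶜ

theorem mem_signAtom_iff {C : ι → Set Ω} {a : ι → Bool} {ω : Ω} :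
    ω ∈ signAtom C a ↔ ∀ k, ω ∈ C k ↔ a k = true := by
  simp only [signAtom, Set.mem_iInter]
  refine forall_congr' fun k ↦ ?_
  cases a k <;> simp

variable [MeasurableSpace Ω] {μ : Measure Ω}

theorem measurableSet_signAtom [Countable ι] {C : ι → Set Ω} (hC : ∀ k, MeasurableSet (C k))
    (a : ι → Bool) : MeasurableSet (signAtom C a) := by
  refine .iInter fun k ↦ ?_
  split_ifs
  exacts [hC k, (hC k).compl]

theorem measure_inter_eq_sum_signAtom [Fintype ι] [DecidableEq ι] {C : ι → Set Ω}
    (hC : ∀ k, MeasurableSet (C k)) (E : Set Ω) (j : ι) :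
    μ (C j ∩ E) = ∑ a : ι → Bool with a j = true, μ (signAtom C a ∩ E) := by
  classical
  let sign : Ω → ι → Bool := fun ω k ↦ decide (ω ∈ C k)
  have preimage_sign (a : ι → Bool) : sign ⁻¹' {a} = signAtom C a := by
    ext ω
    simp only [Set.mem_preimage, Set.mem_singleton_iff, funext_iff, mem_signAtom_iff, sign]
    exact forall_congr' fun k ↦ by cases a k <;> simp
  have measurable_fiber (a : ι → Bool) : MeasurableSet (sign ⁻¹' {a}) :=
    preimage_sign a ▸ measurableSet_signAtom hC a
  calc μ (C j ∩ E)
      = μ.restrict E (sign ⁻¹' ({a | a j = true} : Finset (ι → Bool))) := by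
        rw [← Measure.restrict_apply (hC j)]
        simp [sign]
    _ = ∑ a : ι → Bool with a j = true, μ.restrict E (sign ⁻¹' {a}) :=
        (sum_measure_preimage_singleton _ fun a _ ↦ measurable_fiber a).symm
    _ = ∑ a : ι → Bool with a j = true, μ (signAtom C a ∩ E) :=
        Finset.sum_congr rfl fun a _ ↦ by
          rw [Measure.restrict_apply (measurable_fiber a), preimage_sign]

theorem measureReal_biInter_compl_inter_eq_sum_powerset {t : Finset ι} {s : ι → Set Ω}
    (hs : ∀ i ∈ t, MeasurableSet (s i)) {B : Set Ω} (hB : μ B ≠ ⊤) :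
    μ.real ((⋂ i ∈ t, (s i)ᶜ) ∩ B) =
      ∑ u ∈ t.powerset, (-1 : ℝ) ^ u.card * μ.real ((⋂ i ∈ u, s i) ∩ B) := by
  have : IsFiniteMeasure (μ.restrict B) := isFiniteMeasure_restrict.2 hB
  have restrict_biInter : ∀ u ∈ t.powerset,
      μ.real ((⋂ i ∈ u, s i) ∩ B) = (μ.restrict B).real (⋂ i ∈ u, s i) := fun u hu ↦
    (measureReal_restrict_apply <| u.measurableSet_biInter fun i hi ↦
      hs i (Finset.mem_powerset.1 hu hi)).symm
  have empty_part : t.powerset.filter (¬ ·.Nonempty) = {∅} := by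
    ext u
    simp +contextual [Finset.not_nonempty_iff_eq_empty]
  calc μ.real ((⋂ i ∈ t, (s i)ᶜ) ∩ B)
      = (μ.restrict B).real (⋃ i ∈ t, s i)ᶜ := by
        rw [measureReal_restrict_apply (t.measurableSet_biUnion hs).compl]
        simp only [Set.compl_iUnion]
    _ = (μ.restrict B).real Set.univ - (μ.restrict B).real (⋃ i ∈ t, s i) :=
        measureReal_compl (t.measurableSet_biUnion hs)
    _ = ∑ u ∈ t.powerset, (-1 : ℝ) ^ u.card * (μ.restrict B).real (⋂ i ∈ u, s i) := by
        rw [measureReal_biUnion_eq_sum_powerset hs,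
          ← Finset.sum_filter_add_sum_filter_not t.powerset Finset.Nonempty, empty_part]
        simp [pow_succ, sub_eq_neg_add]
    _ = ∑ u ∈ t.powerset, (-1 : ℝ) ^ u.card * μ.real ((⋂ i ∈ u, s i) ∩ B) :=
        Finset.sum_congr rfl fun u hu ↦ by rw [restrict_biInter u hu]

end Measure

section Renewal

variable {Ω : Type*} [MeasurableSpace Ω] {μ : Measure Ω} {A : ℤ → Set Ω} {q : ℤ → ℝ}

/-- Stationarity of the `{0,1}`-valued process `V` with `A n = {V n = 1}`: its finite-dimensional
distributions are invariant under time shifts. -/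
def IsStationaryProcess (μ : Measure Ω) (A : ℤ → Set Ω) : Prop :=
  ∀ (m : ℤ) (F : Finset ℤ) (ε : ℤ → Bool),
    μ (⋂ n ∈ F, (if ε n then A n else (A n)ᶜ)) =
      μ (⋂ n ∈ F, (if ε n then A (n + m) else (A (n + m))ᶜ))

/-- Regeneration in the state `1` of the process `V` with `A n = {V n = 1}`: given a visit to `1`
at the time `i (Fin.last n)`, the future is independent of earlier visits. The conditional
probabilities are multiplied out, so that events of measure zero need no special treatment. -/
def RegeneratesInOne (μ : Measure Ω) (A : ℤ → Set Ω) : Prop :=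
  ∀ (n r : ℕ) (i : Fin (n + 1) → ℤ), StrictMono i → 1 ≤ r → ∀ a : Fin r → Bool,
    μ (signAtom (fun k : Fin r ↦ A (i (Fin.last n) + (k : ℤ) + 1)) a ∩ ⋂ j, A (i j)) *
        μ (A (i (Fin.last n))) =
      μ (signAtom (fun k : Fin r ↦ A (i (Fin.last n) + (k : ℤ) + 1)) a ∩ A (i (Fin.last n))) *
        μ (⋂ j, A (i j))

/-- The renewal property with transition probabilities `q`: given a visit to `1` at time `x` and
at finitely many earlier times, a visit at a later time `y` has probability `q (y - x)`. The
process need not be stationary; for instance, it may be a delayed renewal process. -/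
def HasRenewalTransitions (μ : Measure Ω) (A : ℤ → Set Ω) (q : ℤ → ℝ) : Prop :=
  ∀ (F : Finset ℤ) (x y : ℤ), (∀ z ∈ F, z < x) → x < y →
    μ.real (A y ∩ (A x ∩ ⋂ z ∈ F, A z)) = μ.real (A x ∩ ⋂ z ∈ F, A z) * q (y - x)

theorem IsStationaryProcess.measure_inter_eq (hstat : IsStationaryProcess μ A) (x y : ℤ) :
    μ (A y ∩ A x) = μ (A (y - x) ∩ A 0) := by
  simpa [Finset.set_biInter_insert] using (hstat x {y - x, 0} fun _ ↦ true).symm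

theorem IsStationaryProcess.measure_eq (hstat : IsStationaryProcess μ A) (x : ℤ) :
    μ (A x) = μ (A 0) := by
  simpa using hstat.measure_inter_eq x x

theorem RegeneratesInOne.measure_inter_mul_eq (hreg : RegeneratesInOne μ A)
    (hA : ∀ n, MeasurableSet (A n)) {F : Finset ℤ} {x y : ℤ} (hF : ∀ z ∈ F, z < x) (hxy : x < y) :
    μ (A y ∩ (A x ∩ ⋂ z ∈ F, A z)) * μ (A x) = μ (A y ∩ A x) * μ (A x ∩ ⋂ z ∈ F, A z) := by
  have hcard : (insert x F).card = F.card + 1 :=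
    Finset.card_insert_of_notMem fun hx ↦ (hF x hx).false
  let i := (insert x F).orderEmbOfFin hcard
  have i_last : i (Fin.last _) = x := by
    refine (Finset.orderEmbOfFin_last hcard F.card.succ_pos).trans ?_
    refine (Finset.max'_eq_iff _ _ _).2 ⟨Finset.mem_insert_self x F, fun z hz ↦ ?_⟩
    rcases Finset.mem_insert.1 hz with rfl | hz
    exacts [le_rfl, (hF z hz).le]
  have iInter_i : ⋂ j, A (i j) = A x ∩ ⋂ z ∈ F, A z := by
    rw [← Finset.set_biInter_insert, ← Set.biInter_range (g := A),
      Finset.range_orderEmbOfFin]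
    rfl
  obtain ⟨d, rfl⟩ : ∃ d : ℕ, y = x + d + 1 := ⟨(y - x - 1).toNat, by lia⟩
  let future : Fin (d + 1) → Set Ω := fun k ↦ A (x + k + 1)
  have future_last : A (x + d + 1) = future (Fin.last d) := by
    simp only [future, Fin.val_last]
  have regenerate_atom := hreg F.card (d + 1) i i.strictMono d.succ_pos
  simp only [i_last, iInter_i] at regenerate_atom
  have future_measurable : ∀ k, MeasurableSet (future k) := fun _ ↦ hA _
  rw [future_last, measure_inter_eq_sum_signAtom future_measurable,
    measure_inter_eq_sum_signAtom future_measurable, Finset.sum_mul, Finset.sum_mul]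
  exact Finset.sum_congr rfl fun a _ ↦ regenerate_atom a

theorem RegeneratesInOne.hasRenewalTransitions (hreg : RegeneratesInOne μ A)
    (hstat : IsStationaryProcess μ A) (hA : ∀ n, MeasurableSet (A n)) (hp : μ.real (A 0) ≠ 0)
    (hq : ∀ d : ℤ, 1 ≤ d → q d = μ.real (A d ∩ A 0) / μ.real (A 0)) :
    HasRenewalTransitions μ A q := by
  intro F x y hF hxy
  have regenerate : μ.real (A y ∩ (A x ∩ ⋂ z ∈ F, A z)) * μ.real (A 0) =
      μ.real (A (y - x) ∩ A 0) * μ.real (A x ∩ ⋂ z ∈ F, A z) := by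
    have h := hreg.measure_inter_mul_eq hA hF hxy
    rw [hstat.measure_eq x, hstat.measure_inter_eq x y] at h
    simpa only [ENNReal.toReal_mul, measureReal_def] using congrArg ENNReal.toReal h
  rw [hq (y - x) (by lia), mul_div_assoc', eq_div_iff hp, regenerate, mul_comm]

theorem HasRenewalTransitions.measureReal_biInter_inter (h : HasRenewalTransitions μ A q)
    {l : List ℤ} {x : ℤ} (hl : (x :: l).Pairwise (· < ·)) {F : Finset ℤ} (hF : ∀ z ∈ F, z < x) :
    μ.real ((⋂ z ∈ x :: l, A z) ∩ ⋂ z ∈ F, A z) =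
      μ.real (A x ∩ ⋂ z ∈ F, A z) * chainProd q (x :: l) := by
  induction l generalizing x F with
  | nil => simp [chainProd]
  | cons y l ih =>
    obtain ⟨hx, hyl⟩ := List.pairwise_cons.1 hl
    have hxy : x < y := hx y List.mem_cons_self
    have past_lt : ∀ z ∈ insert x F, z < y :=
      (Finset.forall_mem_insert ..).2 ⟨hxy, fun z hz ↦ (hF z hz).trans hxy⟩
    calc μ.real ((⋂ z ∈ x :: y :: l, A z) ∩ ⋂ z ∈ F, A z)
        = μ.real ((⋂ z ∈ y :: l, A z) ∩ ⋂ z ∈ insert x F, A z) := by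
          congr 1
          ext ω
          simp only [Set.mem_inter_iff, Set.mem_iInter, List.forall_mem_cons,
            Finset.forall_mem_insert]
          tauto
      _ = μ.real (A y ∩ (A x ∩ ⋂ z ∈ F, A z)) * chainProd q (y :: l) := by
          rw [ih hyl past_lt, Finset.set_biInter_insert]
      _ = μ.real (A x ∩ ⋂ z ∈ F, A z) * chainProd q (x :: y :: l) := by
          rw [h F x y hF hxy, chainProd, mul_assoc]

theorem pairwise_lt_cons_sort_append_singleton {m n : ℤ} (hmn : m < n) {I : Finset ℤ}
    (hI : I ⊆ Finset.Ioo m n) : (m :: (I.sort (· ≤ ·) ++ [n])).Pairwise (· < ·) := by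
  have bounds : ∀ z ∈ I, m < z ∧ z < n := fun z hz ↦ Finset.mem_Ioo.1 (hI hz)
  simp only [List.pairwise_cons, List.pairwise_append, List.mem_append, Finset.mem_sort,
    List.mem_singleton]
  refine ⟨?_, I.sortedLT_sort.pairwise, by simp, ?_⟩
  · rintro z (hz | rfl)
    exacts [(bounds z hz).1, hmn]
  · rintro z hz _ rfl
    exact (bounds z hz).2

theorem HasRenewalTransitions.measureReal_biInter_inter_endpoints
    (h : HasRenewalTransitions μ A q) {m n : ℤ} (hmn : m < n) {I : Finset ℤ}
    (hI : I ⊆ Finset.Ioo m n) :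
    μ.real ((⋂ k ∈ I, A k) ∩ (A m ∩ A n)) =
      μ.real (A m) * chainProd q (m :: (I.sort (· ≤ ·) ++ [n])) := by
  have visits : (⋂ k ∈ I, A k) ∩ (A m ∩ A n) = ⋂ z ∈ m :: (I.sort (· ≤ ·) ++ [n]), A z := by
    ext ω
    simp only [Set.mem_inter_iff, Set.mem_iInter, List.forall_mem_cons, List.forall_mem_append,
      Finset.mem_sort]
    tauto
  rw [visits]
  simpa using h.measureReal_biInter_inter (pairwise_lt_cons_sort_append_singleton hmn hI)
    (F := ∅) (by simp)

end Renewal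

theorem stmt3_general {Ω : Type*} [MeasurableSpace Ω] {μ : Measure Ω} {A : ℤ → Set Ω}
    {q : ℤ → ℝ} (h : HasRenewalTransitions μ A q) {m n : ℤ} (hm : μ (A m) ≠ ⊤) (hmn : m < n)
    {S : Finset ℤ} (hS : S ⊆ Finset.Ioo m n) (hA : ∀ k ∈ S, MeasurableSet (A k)) :
    μ.real (A m ∩ (⋂ k ∈ S, (A k)ᶜ) ∩ A n) =
      μ.real (A m) *
        ∑ I ∈ S.powerset, (-1 : ℝ) ^ I.card * chainProd q (m :: (I.sort (· ≤ ·) ++ [n])) := by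
  calc μ.real (A m ∩ (⋂ k ∈ S, (A k)ᶜ) ∩ A n)
      = μ.real ((⋂ k ∈ S, (A k)ᶜ) ∩ (A m ∩ A n)) := by
        rw [Set.inter_comm (A m), Set.inter_assoc]
    _ = ∑ I ∈ S.powerset, (-1 : ℝ) ^ I.card * μ.real ((⋂ k ∈ I, A k) ∩ (A m ∩ A n)) :=
        measureReal_biInter_compl_inter_eq_sum_powerset hA
          (measure_ne_top_of_subset Set.inter_subset_left hm)
    _ = _ := by
        rw [Finset.mul_sum]
        refine Finset.sum_congr rfl fun I hI ↦ ?_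
        rw [h.measureReal_biInter_inter_endpoints hmn ((Finset.mem_powerset.1 hI).trans hS),
          mul_left_comm]

/-- For a stationary `{0,1}`-valued process `V` (with `A n` the event
`{V n = 1}`) which regenerates in the state `1`, with `μ (A 0) > 0` and transition
probabilities `q d = μ (A d ∩ A 0) / μ (A 0)` for `d ≥ 1`, for every `n ≥ 1`:
`μ (A 0 ∩ (⋂_{0<k<n} (A k)ᶜ) ∩ A n)
  = μ (A 0) * ∑_{I ⊆ {1,…,n-1}} (-1)^|I| ∏_{k=0}^{|I|} q (iᴵ_{k+1} - iᴵ_k)`,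
where, for `I` with sorted elements `iᴵ_1 < … < iᴵ_{|I|}`, one sets `iᴵ_0 = 0` and
`iᴵ_{|I|+1} = n`, and the sum includes the summand for `I = ∅`.  Equivalently, the
interarrival probability `p_n = P(V_n = 1, V_k = 0 for 0 < k < n | V_0 = 1)` equals
this alternating sum. -/
theorem stmt3 {Ω : Type*} [MeasurableSpace Ω] (μ : Measure Ω) [IsProbabilityMeasure μ]
    (A : ℤ → Set Ω) (hA : ∀ n, MeasurableSet (A n))
    (hstat : ∀ (m : ℤ) (F : Finset ℤ) (ε : ℤ → Bool),
      μ (⋂ n ∈ F, (if ε n then A n else (A n)ᶜ))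
        = μ (⋂ n ∈ F, (if ε n then A (n + m) else (A (n + m))ᶜ)))
    (hpos : 0 < μ (A 0))
    (q : ℤ → ℝ) (hq : ∀ d : ℤ, 1 ≤ d → q d = (μ (A d ∩ A 0)).toReal / (μ (A 0)).toReal)
    (hreg : ∀ (n r : ℕ) (i : Fin (n + 1) → ℤ), StrictMono i → 1 ≤ r →
      ∀ a : Fin r → Bool,
        μ ((⋂ k : Fin r, (if a k then A (i (Fin.last n) + (k : ℤ) + 1)
              else (A (i (Fin.last n) + (k : ℤ) + 1))ᶜ)) ∩ ⋂ j, A (i j))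
            * μ (A (i (Fin.last n)))
          = μ ((⋂ k : Fin r, (if a k then A (i (Fin.last n) + (k : ℤ) + 1)
              else (A (i (Fin.last n) + (k : ℤ) + 1))ᶜ)) ∩ A (i (Fin.last n)))
            * μ (⋂ j, A (i j))) :
    ∀ n : ℤ, 1 ≤ n →
      (μ (A 0 ∩ (⋂ k ∈ Finset.Ioo (0 : ℤ) n, (A k)ᶜ) ∩ A n)).toReal
        = (μ (A 0)).toReal *
            ∑ I ∈ (Finset.Ioo (0 : ℤ) n).powerset,
              (-1 : ℝ) ^ I.card * chainProd q (0 :: (Finset.sort I (· ≤ ·) ++ [n]))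
      ∧ (μ (A 0 ∩ (⋂ k ∈ Finset.Ioo (0 : ℤ) n, (A k)ᶜ) ∩ A n)).toReal / (μ (A 0)).toReal
        = ∑ I ∈ (Finset.Ioo (0 : ℤ) n).powerset,
            (-1 : ℝ) ^ I.card * chainProd q (0 :: (Finset.sort I (· ≤ ·) ++ [n])) := by
  intro n hn
  have hp : μ.real (A 0) ≠ 0 := (measureReal_ne_zero_iff ..).2 hpos.ne'
  have avoid := stmt3_general (RegeneratesInOne.hasRenewalTransitions hreg hstat hA hp hq)
    (measure_ne_top μ _) (zero_lt_one.trans_le hn) subset_rfl fun k _ ↦ hA k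
  exact ⟨avoid, (div_eq_iff hp).2 (avoid.trans (mul_comm _ _))⟩
end

section
/- Under the hypotheses of the context, for every integer n ≥ 1, μ({ω : K ⊆ Γ_n(ω)} ∩ {ω : K ⊆ Γ_0(ω)}) = exp(−(1 − a^{−n})·L) · μ({ω : K ⊆ Γ_0(ω)}); that is, the transition probability q_n = P(K ⊆ Γ_n | K ⊆ Γ_0) of the {0,1}-valued sequence V^K_n = 1_{K ⊆ Γ_n} equals exp(−(1 − a^{−n})·L). -/
open MeasureTheory ProbabilityTheory Pointwise

/-! Pulling the recursion back by one step, `c • K ⊆ Γ (n + 1)` means that `(c / a) • K ⊆ Γ n` and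
that the fresh cell `C (n + 1)` contains `(c (a - 1) / a) • K`. The second event is independent
of the past and costs a factor `exp (-c (a - 1) / a * L)`. After `n` steps these exponents add
up to a geometric series with sum `c (1 - a ^ (-n)) * L`, and what is left to ask of `Γ 0` is
`(c / a ^ n) • K ⊆ Γ 0`, which already follows from `K ⊆ Γ 0` when `c ≤ a ^ n`. -/

section Containment

variable {E Ω : Type*} [MulAction ℝ E]

/-- The event that the random set `X` contains the dilate `c • K`. The argument sees the random
sets `Γ n` and `C n` only through these events. -/
def containmentEvent (K : Set E) (X : Ω → Set E) (c : ℝ) : Set Ω :=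
  {ω | c • K ⊆ X ω}

/-- The σ-algebra of the information which a random set `X` carries about the dilates of `K` it
contains. Only dilates by positive factors are taken into account. -/
abbrev containmentSigmaAlgebra (K : Set E) (X : Ω → Set E) : MeasurableSpace Ω :=
  MeasurableSpace.generateFrom {s | ∃ c : ℝ, 0 < c ∧ s = containmentEvent K X c}

/-- The natural filtration, up to time `n`, of the dilates of `K` contained in the random sets
`Γ m`. It is the past from which the innovation at time `n + 1` is independent. -/
abbrev containmentHistory (K : Set E) (Γ : ℤ → Ω → Set E) (n : ℤ) : MeasurableSpace Ω :=
  ⨆ m ≤ n, containmentSigmaAlgebra K (Γ m)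

theorem containmentEvent_smul_inter_smul (K : Set E) {a b : ℝ} (ha : a ≠ 0) (hb : b ≠ 0)
    (X Y : Ω → Set E) (c : ℝ) :
    containmentEvent K (fun ω => a • X ω ∩ b • Y ω) c =
      containmentEvent K Y (c / b) ∩ containmentEvent K X (c / a) := by
  ext ω
  simp only [containmentEvent, Set.mem_ofPred_eq, Set.mem_inter_iff, Set.subset_inter_iff,
    Set.subset_smul_set_iff₀ ha, Set.subset_smul_set_iff₀ hb, smul_smul, inv_mul_eq_div, and_comm]

theorem measurableSet_containmentEvent (K : Set E) (X : Ω → Set E) {c : ℝ} (hc : 0 < c) :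
    MeasurableSet[containmentSigmaAlgebra K X] (containmentEvent K X c) :=
  MeasurableSpace.measurableSet_generateFrom ⟨c, hc, rfl⟩

theorem measurableSet_containmentHistory (K : Set E) (Γ : ℤ → Ω → Set E) (n : ℤ) {c : ℝ}
    (hc : 0 < c) : MeasurableSet[containmentHistory K Γ n] (containmentEvent K (Γ n) c) :=
  have hle : containmentSigmaAlgebra K (Γ n) ≤ containmentHistory K Γ n :=
    le_iSup₂_of_le n le_rfl le_rfl
  hle _ (measurableSet_containmentEvent K (Γ n) hc)

theorem containmentHistory_mono (K : Set E) (Γ : ℤ → Ω → Set E) :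
    Monotone (containmentHistory K Γ) :=
  fun _ _ hmn => biSup_mono fun _ hk => hk.trans hmn

end Containment

theorem inv_div_sub_one_mul_geom_sum_inv {F : Type*} [Field F] {a : F} (ha : a ≠ 0) (n : ℕ) :
    (a / (a - 1))⁻¹ * ∑ k ∈ Finset.range n, a⁻¹ ^ k = 1 - (a ^ n)⁻¹ := by
  rw [inv_div, sub_div, div_self ha, one_div, mul_neg_geom_sum, inv_pow]

section Recursion

variable {E Ω : Type*} [MulAction ℝ E] {K : Set E} [MeasurableSpace Ω]
  {μ : Measure Ω} {Γ C : ℤ → Ω → Set E} {a b L : ℝ}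

theorem measure_containmentEvent_succ_inter (ha : 0 < a) (hb : 0 < b) {n : ℤ}
    (hrec : ∀ ω, Γ (n + 1) ω = a • Γ n ω ∩ b • C (n + 1) ω)
    (hindep : Indep (containmentSigmaAlgebra K (C (n + 1))) (containmentHistory K Γ n) μ)
    {A : Set Ω} (hA : MeasurableSet[containmentHistory K Γ n] A) {c : ℝ} (hc : 0 < c) :
    μ (containmentEvent K (Γ (n + 1)) c ∩ A) =
      μ (containmentEvent K (C (n + 1)) (c / b)) * μ (containmentEvent K (Γ n) (c / a) ∩ A) := by
  have hpast : MeasurableSet[containmentHistory K Γ n] (containmentEvent K (Γ n) (c / a)) :=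
    measurableSet_containmentHistory K Γ n (div_pos hc ha)
  rw [funext hrec, containmentEvent_smul_inter_smul K ha.ne' hb.ne', Set.inter_assoc]
  exact (Indep_iff _ _ μ).mp hindep _ _
    (measurableSet_containmentEvent K (C (n + 1)) (div_pos hc hb)) (hpast.inter hA)

theorem measure_containmentEvent_add_inter (ha : 0 < a) (hb : 0 < b)
    (hrec : ∀ n ω, Γ (n + 1) ω = a • Γ n ω ∩ b • C (n + 1) ω)
    (hprobC : ∀ n c, 0 < c →
      μ (containmentEvent K (C n) c) = ENNReal.ofReal (Real.exp (-(c * L))))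
    (hindep : ∀ n, Indep (containmentSigmaAlgebra K (C (n + 1))) (containmentHistory K Γ n) μ)
    {m : ℤ} {A : Set Ω} (hA : MeasurableSet[containmentHistory K Γ m] A) (n : ℕ)
    {c : ℝ} (hc : 0 < c) :
    μ (containmentEvent K (Γ (m + n)) c ∩ A) =
      ENNReal.ofReal (Real.exp (-(c / b * (∑ k ∈ Finset.range n, a⁻¹ ^ k) * L))) *
        μ (containmentEvent K (Γ m) (c / a ^ n) ∩ A) := by
  induction n generalizing c with
  | zero => simp
  | succ n ih =>
    have hA_past : MeasurableSet[containmentHistory K Γ (m + n)] A :=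
      containmentHistory_mono K Γ (by lia) _ hA
    have exponent_add : -(c / b * L) + -(c / a / b * (∑ k ∈ Finset.range n, a⁻¹ ^ k) * L) =
        -(c / b * (∑ k ∈ Finset.range (n + 1), a⁻¹ ^ k) * L) := by
      rw [geom_sum_succ]
      ring
    rw [Nat.cast_succ, ← add_assoc,
      measure_containmentEvent_succ_inter ha hb (hrec _) (hindep _) hA_past hc,
      hprobC _ _ (div_pos hc hb), ih (div_pos hc ha), ← mul_assoc,
      ← ENNReal.ofReal_mul (Real.exp_nonneg _), ← Real.exp_add, exponent_add, div_div,
      ← pow_succ']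

end Recursion

section StarConvex

variable {E Ω : Type*} [AddCommGroup E] [Module ℝ E] {K : Set E}

theorem containmentEvent_subset_of_le (hK : StarConvex ℝ 0 K) (X : Ω → Set E) {c d : ℝ}
    (hc : 0 ≤ c) (hcd : c ≤ d) :
    containmentEvent K X d ⊆ containmentEvent K X c := by
  have smul_subset : c • K ⊆ d • K := by
    rintro _ ⟨x, hx, rfl⟩
    have hd : 0 ≤ d := hc.trans hcd
    have hdc : d = 0 → c = 0 := fun hd0 => le_antisymm (hcd.trans_eq hd0) hc
    refine ⟨(c / d) • x, hK.smul_mem hx (by positivity) (div_le_one_of_le₀ hcd hd), ?_⟩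
    simp only [smul_smul, mul_div_cancel_of_imp' hdc]
  exact fun _ hω => smul_subset.trans hω

theorem stmt7_general [MeasurableSpace Ω] {μ : Measure Ω} {Γ C : ℤ → Ω → Set E} {a L : ℝ}
    (hK : StarConvex ℝ 0 K) (ha : 1 < a)
    (hrec : ∀ n ω, Γ (n + 1) ω = a • Γ n ω ∩ (a / (a - 1)) • C (n + 1) ω)
    (hprobC : ∀ n c, 0 < c →
      μ (containmentEvent K (C n) c) = ENNReal.ofReal (Real.exp (-(c * L))))
    (hindep : ∀ n, Indep (containmentSigmaAlgebra K (C (n + 1))) (containmentHistory K Γ n) μ)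
    (m : ℤ) (n : ℕ) {c d : ℝ} (hc : 0 < c) (hd : 0 < d) (hcd : c ≤ d * a ^ n) :
    μ (containmentEvent K (Γ (m + n)) c ∩ containmentEvent K (Γ m) d) =
      ENNReal.ofReal (Real.exp (-(c * (1 - (a ^ n)⁻¹) * L))) *
        μ (containmentEvent K (Γ m) d) := by
  have ha0 : 0 < a := one_pos.trans ha
  have hsub : containmentEvent K (Γ m) d ⊆ containmentEvent K (Γ m) (c / a ^ n) :=
    containmentEvent_subset_of_le hK (Γ m) (by positivity) ((div_le_iff₀ (by positivity)).2 hcd)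
  rw [measure_containmentEvent_add_inter ha0 (div_pos ha0 (sub_pos.2 ha)) hrec hprobC hindep
      (measurableSet_containmentHistory K Γ m hd) n hc, Set.inter_eq_right.2 hsub,
    div_eq_mul_inv c, mul_assoc c, inv_div_sub_one_mul_geom_sum_inv ha0.ne' n]

end StarConvex

/-- Under the hypotheses of the context (pathwise recursion, marginal
probabilities `μ {c•K ⊆ Γ n} = μ {c•K ⊆ C n} = exp (-c·L)`, and independence of the
σ-algebra of the events `{c•K ⊆ C (n+1)}` from the past), for every integer `n ≥ 1`,
`μ ({K ⊆ Γ n} ∩ {K ⊆ Γ 0}) = exp (-(1 - a^{-n})·L) · μ {K ⊆ Γ 0}`; that is, the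
transition probability `qₙ = P(K ⊆ Γ n | K ⊆ Γ 0)` of the `{0,1}`-valued sequence
`Vᴷ n = 1_{K ⊆ Γ n}` equals `exp (-(1 - a^{-n})·L)`. -/
theorem stmt7 {ℓ : ℕ} (hℓ : 1 ≤ ℓ) (K : Set (EuclideanSpace ℝ (Fin ℓ)))
    (hKcomp : IsCompact K) (hKconv : Convex ℝ K)
    (hK0 : (0 : EuclideanSpace ℝ (Fin ℓ)) ∈ interior K)
    (L a : ℝ) (hL : 0 < L) (ha : 1 < a)
    {Ω : Type*} [MeasurableSpace Ω] (μ : Measure Ω) [IsProbabilityMeasure μ]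
    (Γ C : ℤ → Ω → Set (EuclideanSpace ℝ (Fin ℓ)))
    (hrec : ∀ (n : ℤ) (ω : Ω), Γ (n + 1) ω = (a • Γ n ω) ∩ ((a / (a - 1)) • C (n + 1) ω))
    (hmeasΓ : ∀ (n : ℤ) (c : ℝ), 0 < c → MeasurableSet {ω | c • K ⊆ Γ n ω})
    (hmeasC : ∀ (n : ℤ) (c : ℝ), 0 < c → MeasurableSet {ω | c • K ⊆ C n ω})
    (hprobΓ : ∀ (n : ℤ) (c : ℝ), 0 < c →
      μ {ω | c • K ⊆ Γ n ω} = ENNReal.ofReal (Real.exp (-(c * L))))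
    (hprobC : ∀ (n : ℤ) (c : ℝ), 0 < c →
      μ {ω | c • K ⊆ C n ω} = ENNReal.ofReal (Real.exp (-(c * L))))
    (hindep : ∀ n : ℤ,
      Indep
        (MeasurableSpace.generateFrom {s | ∃ c : ℝ, 0 < c ∧ s = {ω | c • K ⊆ C (n + 1) ω}})
        (MeasurableSpace.generateFrom {s | ∃ m : ℤ, m ≤ n ∧ ∃ c : ℝ, 0 < c ∧
          (s = {ω | c • K ⊆ Γ m ω} ∨ s = {ω | c • K ⊆ C m ω})}) μ) :
    ∀ n : ℤ, 1 ≤ n →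
      μ ({ω | K ⊆ Γ n ω} ∩ {ω | K ⊆ Γ 0 ω})
        = ENNReal.ofReal (Real.exp (-((1 - a ^ (-n)) * L))) * μ {ω | K ⊆ Γ 0 ω} := by
  have hindepΓ : ∀ n, Indep (containmentSigmaAlgebra K (C (n + 1))) (containmentHistory K Γ n) μ :=
    fun n => indep_of_indep_of_le_right (hindep n) <| iSup₂_le fun m hm =>
      MeasurableSpace.generateFrom_mono fun _ ⟨c, hc, hs⟩ => ⟨m, hm, c, hc, .inl hs⟩
  intro n hn
  lift n to ℕ using by lia
  simpa [containmentEvent] using stmt7_general (hKconv.starConvex (interior_subset hK0)) ha hrec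
    hprobC hindepΓ 0 n one_pos one_pos (by simpa using one_le_pow₀ ha.le)
end

section
/- Under the hypotheses of the context, for every n ≥ 0 and all integers i_0 < i_1 < ... < i_n, μ(⋂_{l=0}^n {ω : K ⊆ Γ_{i_l}(ω)}) = exp( (−(n+1) + ∑_{l=1}^n a^{−(i_l − i_{l−1})}) · L ). -/
open MeasureTheory ProbabilityTheory Pointwise

/-!
Since `c • K ⊆ Γ (n + 1)` splits into `(c / a) • K ⊆ Γ n` and `(c (1 - a⁻¹)) • K ⊆ C (n + 1)`,
independence lets one trade an inclusion at time `n + 1` for one at time `n` with radius shrunk by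
`a`, at the cost of a factor `exp (-c (1 - a⁻¹) L)`. After `k` such steps, starting from `c = 1`,
the exponents telescope to `-(1 - a⁻ᵏ) L` and the remaining inclusion `a⁻ᵏ • K ⊆ Γ n` is implied
by `K ⊆ Γ n`, because `K` is star-shaped about `0`. Peeling off the times from the last to the
first thus factorizes the joint probability.
-/

theorem smul_set_subset_smul_set_iff_div_smul {G₀ α : Type*} [CommGroupWithZero G₀]
    [MulAction G₀ α] {b : G₀} (hb : b ≠ 0) (c : G₀) (s t : Set α) :
    c • s ⊆ b • t ↔ (c / b) • s ⊆ t := by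
  rw [Set.subset_smul_set_iff₀ hb, smul_smul, inv_mul_eq_div]

section Inclusion

variable {E Ω : Type*} [SMul ℝ E]

/-- The σ-algebra on `Ω` generated by the events that the random set `X` contains a positive
multiple `c • K`: the information about `X` seen by the test body `K`. -/
abbrev inclusionSigma (K : Set E) (X : Ω → Set E) : MeasurableSpace Ω :=
  MeasurableSpace.generateFrom {s | ∃ c : ℝ, 0 < c ∧ s = {ω | c • K ⊆ X ω}}

/-- The past up to and including time `n` of the process `Γ` of random sets, as seen by the test
body `K`. It is not bundled as a `Filtration`, which would require the inclusion events to be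
measurable in an ambient σ-algebra. -/
abbrev inclusionHistory (K : Set E) (Γ : ℤ → Ω → Set E) (n : ℤ) : MeasurableSpace Ω :=
  ⨆ m ≤ n, inclusionSigma K (Γ m)

theorem measurableSet_inclusionSigma (K : Set E) (X : Ω → Set E) {c : ℝ} (hc : 0 < c) :
    MeasurableSet[inclusionSigma K X] {ω | c • K ⊆ X ω} :=
  MeasurableSpace.measurableSet_generateFrom ⟨c, hc, rfl⟩

theorem measurableSet_inclusionHistory (K : Set E) (Γ : ℤ → Ω → Set E) {m n : ℤ} (hmn : m ≤ n)
    {c : ℝ} (hc : 0 < c) : MeasurableSet[inclusionHistory K Γ n] {ω | c • K ⊆ Γ m ω} :=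
  le_iSup₂ (f := fun m (_ : m ≤ n) => inclusionSigma K (Γ m)) m hmn _
    (measurableSet_inclusionSigma K (Γ m) hc)

theorem inclusionHistory_mono (K : Set E) (Γ : ℤ → Ω → Set E) : Monotone (inclusionHistory K Γ) :=
  fun _ _ hnm => biSup_mono fun _ hm => hm.trans hnm

theorem inclusionHistory_le_generateFrom (K : Set E) (Γ C : ℤ → Ω → Set E) (n : ℤ) :
    inclusionHistory K Γ n ≤ MeasurableSpace.generateFrom {s | ∃ m : ℤ, m ≤ n ∧
      ∃ c : ℝ, 0 < c ∧ (s = {ω | c • K ⊆ Γ m ω} ∨ s = {ω | c • K ⊆ C m ω})} :=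
  iSup₂_le fun m hm => MeasurableSpace.generateFrom_mono
    fun _ ⟨c, hc, hs⟩ => ⟨m, hm, c, hc, .inl hs⟩

end Inclusion

/-- The process `Γ` of random sets is driven by the innovations `C` through
`Γ (n + 1) = a • Γ n ∩ (a / (a - 1)) • C (n + 1)`, where each `C (n + 1)` is independent of the
past of `Γ` and contains `c • K` with probability `exp (-c L)`. For the zero cell process of a
tessellation, `L` is the measure `Λ([K])` of the hyperplanes hitting `K`; the laws of the `Γ n`
are left free. -/
structure IsCellRecursion {E Ω : Type*} [SMul ℝ E] [MeasurableSpace Ω] (K : Set E) (L a : ℝ)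
    (μ : Measure Ω) (Γ C : ℤ → Ω → Set E) : Prop where
  eq_inter : ∀ (n : ℤ) (ω : Ω), Γ (n + 1) ω = (a • Γ n ω) ∩ ((a / (a - 1)) • C (n + 1) ω)
  measure_innovation : ∀ (n : ℤ) (c : ℝ), 0 < c →
    μ {ω | c • K ⊆ C n ω} = ENNReal.ofReal (Real.exp (-(c * L)))
  indep_innovation : ∀ n : ℤ, Indep (inclusionSigma K (C (n + 1))) (inclusionHistory K Γ n) μ

namespace IsCellRecursion

section MulAction

variable {E Ω : Type*} [MulAction ℝ E] [MeasurableSpace Ω] {K : Set E} {L a : ℝ} {μ : Measure Ω}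
  {Γ C : ℤ → Ω → Set E}

theorem setOf_smul_subset_succ (h : IsCellRecursion K L a μ Γ C) (ha : 1 < a) (n : ℤ) (c : ℝ) :
    {ω | c • K ⊆ Γ (n + 1) ω} =
      {ω | (c / a) • K ⊆ Γ n ω} ∩ {ω | (c * (1 - a⁻¹)) • K ⊆ C (n + 1) ω} := by
  have ha₀ : a ≠ 0 := by positivity
  have ha₁ : a - 1 ≠ 0 := (sub_pos.2 ha).ne'
  have hradius : c / (a / (a - 1)) = c * (1 - a⁻¹) := by field_simp
  ext ω
  simp only [h.eq_inter, Set.subset_inter_iff, smul_set_subset_smul_set_iff_div_smul ha₀,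
    smul_set_subset_smul_set_iff_div_smul (div_ne_zero ha₀ ha₁), hradius, Set.mem_inter_iff,
    Set.mem_ofPred_eq]

theorem measure_inter_succ (h : IsCellRecursion K L a μ Γ C) (ha : 1 < a) {n : ℤ} {c : ℝ}
    (hc : 0 < c) {A : Set Ω} (hA : MeasurableSet[inclusionHistory K Γ n] A) :
    μ (A ∩ {ω | c • K ⊆ Γ (n + 1) ω}) =
      μ (A ∩ {ω | (c / a) • K ⊆ Γ n ω}) * ENNReal.ofReal (Real.exp (-(c * (1 - a⁻¹) * L))) := by
  have hc_innovation : 0 < c * (1 - a⁻¹) := mul_pos hc (sub_pos.2 (inv_lt_one_of_one_lt₀ ha))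
  have hpast : MeasurableSet[inclusionHistory K Γ n] (A ∩ {ω | (c / a) • K ⊆ Γ n ω}) :=
    hA.inter (measurableSet_inclusionHistory K Γ le_rfl (by positivity))
  rw [h.setOf_smul_subset_succ ha, ← Set.inter_assoc, Set.inter_comm,
    ← h.measure_innovation (n + 1) _ hc_innovation, mul_comm (μ _)]
  exact (Indep_iff _ _ μ).1 (h.indep_innovation n) _ _
    (measurableSet_inclusionSigma K (C (n + 1)) hc_innovation) hpast

theorem measure_inter_add_natCast (h : IsCellRecursion K L a μ Γ C) (ha : 1 < a) {n : ℤ} {c : ℝ}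
    (hc : 0 < c) (k : ℕ) {A : Set Ω} (hA : MeasurableSet[inclusionHistory K Γ n] A) :
    μ (A ∩ {ω | c • K ⊆ Γ (n + k) ω}) =
      μ (A ∩ {ω | (c / a ^ k) • K ⊆ Γ n ω}) *
        ENNReal.ofReal (Real.exp (-(c * (1 - (a ^ k)⁻¹) * L))) := by
  induction k generalizing c with
  | zero => simp
  | succ k ih =>
    have hexponent : -(c / a * (1 - (a ^ k)⁻¹) * L) + -(c * (1 - a⁻¹) * L) =
        -(c * (1 - (a ^ (k + 1))⁻¹) * L) := by
      field_simp
      ring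
    have hA_later : MeasurableSet[inclusionHistory K Γ (n + k)] A :=
      inclusionHistory_mono K Γ (by lia) _ hA
    rw [Nat.cast_succ, ← add_assoc, h.measure_inter_succ ha hc hA_later,
      ih (c := c / a) (by positivity), mul_assoc, ← ENNReal.ofReal_mul (Real.exp_pos _).le,
      ← Real.exp_add, hexponent, div_div, ← pow_succ']

end MulAction

section StarConvex

variable {E Ω : Type*} [AddCommGroup E] [Module ℝ E] [MeasurableSpace Ω] {K : Set E} {L a : ℝ}
  {μ : Measure Ω} {Γ C : ℤ → Ω → Set E}

theorem measure_inter_of_subset (h : IsCellRecursion K L a μ Γ C) (hK : StarConvex ℝ 0 K)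
    (ha : 1 < a) {m n : ℤ} (hnm : n ≤ m) {A : Set Ω}
    (hA : MeasurableSet[inclusionHistory K Γ n] A) (hAn : A ⊆ {ω | K ⊆ Γ n ω}) :
    μ (A ∩ {ω | K ⊆ Γ m ω}) =
      μ A * ENNReal.ofReal (Real.exp (-((1 - a ^ (-(m - n))) * L))) := by
  obtain ⟨k, rfl⟩ := Int.le.dest hnm
  have hshrink : (1 / a ^ k) • K ⊆ K := by
    rintro _ ⟨x, hx, rfl⟩
    exact hK.smul_mem hx (by positivity) (div_le_one_of_le₀ (one_le_pow₀ ha.le) (by positivity))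
  have hAk : A ∩ {ω | (1 / a ^ k) • K ⊆ Γ n ω} = A :=
    Set.inter_eq_left.2 fun _ hω => hshrink.trans (hAn hω)
  simpa only [one_smul, one_mul, hAk, add_sub_cancel_left, zpow_neg, zpow_natCast] using
    h.measure_inter_add_natCast ha one_pos k hA

theorem measure_iInter_eq_prod (h : IsCellRecursion K L a μ Γ C) (hK : StarConvex ℝ 0 K)
    (ha : 1 < a) {n : ℕ} {i : Fin (n + 1) → ℤ} (hi : Monotone i) :
    μ (⋂ l, {ω | K ⊆ Γ (i l) ω}) = μ {ω | K ⊆ Γ (i 0) ω} *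
      ∏ l : Fin n, ENNReal.ofReal
        (Real.exp (-((1 - a ^ (-(i l.succ - i l.castSucc))) * L))) := by
  induction n with
  | zero => simp [← Set.iInf_eq_iInter]
  | succ n ih =>
    set A : Set Ω := ⋂ l : Fin (n + 1), {ω | K ⊆ Γ (i l.castSucc) ω} with hA_def
    have hsplit : ⋂ l, {ω | K ⊆ Γ (i l) ω} = A ∩ {ω | K ⊆ Γ (i (Fin.last (n + 1))) ω} := by
      ext ω
      simp only [hA_def, Set.mem_iInter, Set.mem_inter_iff, Fin.forall_fin_succ']
    have hA : MeasurableSet[inclusionHistory K Γ (i (Fin.last n).castSucc)] A :=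
      MeasurableSet.iInter fun l => by
        simpa only [one_smul] using measurableSet_inclusionHistory K Γ
          (hi (Fin.castSucc_le_castSucc_iff.2 l.le_last)) one_pos
    have hinit := ih (hi.comp Fin.strictMono_castSucc.monotone)
    simp only [Function.comp_apply] at hinit
    rw [hsplit, h.measure_inter_of_subset hK ha (hi (Fin.castSucc_lt_last _).le) hA
      (Set.iInter_subset _ (Fin.last n)), hinit, Fin.prod_univ_castSucc, mul_assoc]
    simp only [Fin.castSucc_zero, Fin.succ_last, Fin.succ_castSucc]

end StarConvex

end IsCellRecursion

theorem stmt8_general {E Ω : Type*} [AddCommGroup E] [Module ℝ E] [MeasurableSpace Ω] {K : Set E}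
    (hK : StarConvex ℝ 0 K) {L a : ℝ} (ha : 1 < a) {μ : Measure Ω} {Γ C : ℤ → Ω → Set E}
    (h : IsCellRecursion K L a μ Γ C)
    {n : ℕ} {i : Fin (n + 1) → ℤ} (hi : Monotone i)
    (hΓ : μ {ω | K ⊆ Γ (i 0) ω} = ENNReal.ofReal (Real.exp (-L))) :
    μ (⋂ l, {ω | K ⊆ Γ (i l) ω}) = ENNReal.ofReal (Real.exp
      ((-(n + 1 : ℝ) + ∑ l : Fin n, a ^ (-(i l.succ - i l.castSucc))) * L)) := by
  have hexponent : -L + ∑ l : Fin n, -((1 - a ^ (-(i l.succ - i l.castSucc))) * L) =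
      (-(n + 1 : ℝ) + ∑ l : Fin n, a ^ (-(i l.succ - i l.castSucc))) * L := by
    rw [Finset.sum_neg_distrib, ← Finset.sum_mul, Finset.sum_sub_distrib, Fin.sum_const,
      nsmul_one]
    ring
  rw [h.measure_iInter_eq_prod hK ha hi, hΓ,
    ← ENNReal.ofReal_prod_of_nonneg fun _ _ => (Real.exp_pos _).le,
    ← ENNReal.ofReal_mul (Real.exp_pos _).le, ← Real.exp_sum, ← Real.exp_add, hexponent]

/-- Under the hypotheses of the context, for every `n ≥ 0` and all
integers `i 0 < i 1 < … < i n`,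
`μ (⋂_{l=0}^n {K ⊆ Γ (i l)}) = exp ((-(n+1) + ∑_{l=1}^n a^{-(i_l - i_{l-1})}) · L)`. -/
theorem stmt8 {ℓ : ℕ} (hℓ : 1 ≤ ℓ) (K : Set (EuclideanSpace ℝ (Fin ℓ)))
    (hKcomp : IsCompact K) (hKconv : Convex ℝ K)
    (hK0 : (0 : EuclideanSpace ℝ (Fin ℓ)) ∈ interior K)
    (L a : ℝ) (hL : 0 < L) (ha : 1 < a)
    {Ω : Type*} [MeasurableSpace Ω] (μ : Measure Ω) [IsProbabilityMeasure μ]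
    (Γ C : ℤ → Ω → Set (EuclideanSpace ℝ (Fin ℓ)))
    (hrec : ∀ (n : ℤ) (ω : Ω), Γ (n + 1) ω = (a • Γ n ω) ∩ ((a / (a - 1)) • C (n + 1) ω))
    (hmeasΓ : ∀ (n : ℤ) (c : ℝ), 0 < c → MeasurableSet {ω | c • K ⊆ Γ n ω})
    (hmeasC : ∀ (n : ℤ) (c : ℝ), 0 < c → MeasurableSet {ω | c • K ⊆ C n ω})
    (hprobΓ : ∀ (n : ℤ) (c : ℝ), 0 < c →
      μ {ω | c • K ⊆ Γ n ω} = ENNReal.ofReal (Real.exp (-(c * L))))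
    (hprobC : ∀ (n : ℤ) (c : ℝ), 0 < c →
      μ {ω | c • K ⊆ C n ω} = ENNReal.ofReal (Real.exp (-(c * L))))
    (hindep : ∀ n : ℤ,
      Indep
        (MeasurableSpace.generateFrom {s | ∃ c : ℝ, 0 < c ∧ s = {ω | c • K ⊆ C (n + 1) ω}})
        (MeasurableSpace.generateFrom {s | ∃ m : ℤ, m ≤ n ∧ ∃ c : ℝ, 0 < c ∧
          (s = {ω | c • K ⊆ Γ m ω} ∨ s = {ω | c • K ⊆ C m ω})}) μ) :
    ∀ (n : ℕ) (i : Fin (n + 1) → ℤ), StrictMono i →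
      μ (⋂ l : Fin (n + 1), {ω | K ⊆ Γ (i l) ω})
        = ENNReal.ofReal (Real.exp
            ((-(n + 1 : ℝ) + ∑ l : Fin n, a ^ (-(i l.succ - i l.castSucc))) * L)) := by
  have hrecursion : IsCellRecursion K L a μ Γ C := ⟨hrec, hprobC, fun n =>
    indep_of_indep_of_le_right (hindep n) (inclusionHistory_le_generateFrom K Γ C n)⟩
  exact fun n i hi => stmt8_general (hKconv.starConvex (interior_subset hK0)) ha hrecursion
    hi.monotone (by simpa only [one_smul, one_mul] using hprobΓ (i 0) 1 one_pos)
end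

section
/- Under the hypotheses of the context, for every n ∈ ℤ, μ({ω : a•K ⊆ Γ_n(ω)} ∩ {ω : K ⊆ Γ_n(ω)} ∩ {ω : K ⊆ Γ_{n−1}(ω)}) = exp(−(a + a^{−1} − 2)·L) · μ({K ⊆ Γ_n} ∩ {K ⊆ Γ_{n−1}}); that is, P(a•K ⊆ Γ_n | K ⊆ Γ_n and K ⊆ Γ_{n−1}) = exp(−(a + a^{−1} − 2)·L). -/
open MeasureTheory ProbabilityTheory Pointwise

/-!
The two conditioning events are turned into events about independent objects. Since `0` is a star
centre of `K`, `K ⊆ Γ (n - 1)` already forces `K ⊆ a • Γ (n - 1)`, so by the recursion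
`K ⊆ Γ n` and `K ⊆ Γ (n - 1)` hold jointly iff `(a / (a - 1))⁻¹ • K ⊆ C n` and `K ⊆ Γ (n - 1)`;
this has probability `exp (-(1 - a⁻¹) * L) * exp (-L)`. Conversely `a • K ⊆ Γ n` implies both
conditioning events, so the triple intersection has probability `exp (-a * L)`.
-/

lemma indepSet_of_indep_generateFrom {Ω : Type*} [MeasurableSpace Ω] {μ : Measure Ω}
    {𝒮 𝒯 : Set (Set Ω)} {s t : Set Ω}
    (h : Indep (MeasurableSpace.generateFrom 𝒮) (MeasurableSpace.generateFrom 𝒯) μ)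
    (hs : s ∈ 𝒮) (ht : t ∈ 𝒯) : IndepSet s t μ :=
  h.indepSet_of_measurableSet (MeasurableSpace.measurableSet_generateFrom hs)
    (MeasurableSpace.measurableSet_generateFrom ht)

section Inclusions

variable {𝕜 E : Type*} {K X D : Set E} {a b : 𝕜}

lemma subset_smul_of_starConvex_zero [DivisionRing 𝕜] [LinearOrder 𝕜] [IsStrictOrderedRing 𝕜]
    [AddCommGroup E] [Module 𝕜 E] (hK : StarConvex 𝕜 0 K) (ha : 1 ≤ a) : K ⊆ a • K := by
  have ha₀ : 0 < a := zero_lt_one.trans_le ha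
  rw [Set.subset_smul_set_iff₀ ha₀.ne']
  rintro _ ⟨x, hx, rfl⟩
  exact hK.smul_mem hx (inv_nonneg.2 ha₀.le) (inv_le_one_of_one_le₀ ha)

variable [GroupWithZero 𝕜] [MulAction 𝕜 E]

lemma subset_smul_inter_smul_and_subset_iff (hb : b ≠ 0) (hK : K ⊆ a • K) :
    K ⊆ a • X ∩ b • D ∧ K ⊆ X ↔ b⁻¹ • K ⊆ D ∧ K ⊆ X := by
  rw [Set.subset_inter_iff, Set.subset_smul_set_iff₀ hb]
  exact ⟨fun h => ⟨h.1.2, h.2⟩,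
    fun h => ⟨⟨hK.trans (Set.smul_set_mono h.2), h.1⟩, h.2⟩⟩

end Inclusions

section Events

variable {Ω 𝕜 E : Type*} [GroupWithZero 𝕜] [MulAction 𝕜 E] {K : Set E} {a b : 𝕜}
  {X Y D : Ω → Set E}

lemma setOf_smul_subset_inter_setOf_subset_eq (ha : a ≠ 0) (hK : K ⊆ a • K)
    (hYX : ∀ ω, Y ω ⊆ a • X ω) :
    {ω | a • K ⊆ Y ω} ∩ {ω | K ⊆ Y ω} ∩ {ω | K ⊆ X ω} = {ω | a • K ⊆ Y ω} := by
  rw [Set.inter_assoc, Set.inter_eq_left]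
  exact fun ω hω => ⟨hK.trans hω, (Set.smul_set_subset_smul_set_iff₀ ha).1 (hω.trans (hYX ω))⟩

lemma measure_setOf_subset_inter_setOf_subset [MeasurableSpace Ω] {μ : Measure Ω} (hb : b ≠ 0)
    (hK : K ⊆ a • K) (hY : ∀ ω, Y ω = a • X ω ∩ b • D ω)
    (hDX : IndepSet {ω | b⁻¹ • K ⊆ D ω} {ω | K ⊆ X ω} μ) :
    μ ({ω | K ⊆ Y ω} ∩ {ω | K ⊆ X ω}) = μ {ω | b⁻¹ • K ⊆ D ω} * μ {ω | K ⊆ X ω} := by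
  have hYX : {ω | K ⊆ Y ω} ∩ {ω | K ⊆ X ω} = {ω | b⁻¹ • K ⊆ D ω} ∩ {ω | K ⊆ X ω} := by
    ext ω
    simpa only [Set.mem_inter_iff, Set.mem_ofPred_eq, hY] using
      subset_smul_inter_smul_and_subset_iff hb hK
  rw [hYX, hDX.measure_inter_eq_mul]

end Events

lemma ofReal_exp_neg_mul_eq_mul_mul {a : ℝ} (ha : a ≠ 0) (L : ℝ) :
    ENNReal.ofReal (Real.exp (-(a * L))) =
      ENNReal.ofReal (Real.exp (-((a + a⁻¹ - 2) * L))) *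
        (ENNReal.ofReal (Real.exp (-((a / (a - 1))⁻¹ * L))) * ENNReal.ofReal (Real.exp (-L))) := by
  rw [← ENNReal.ofReal_mul (Real.exp_nonneg _), ← ENNReal.ofReal_mul (Real.exp_nonneg _),
    ← Real.exp_add, ← Real.exp_add]
  congr 2
  rw [inv_div]
  field_simp
  ring

theorem stmt10_general {E : Type*} [AddCommGroup E] [Module ℝ E] {K : Set E}
    (hK : StarConvex ℝ 0 K) {L a : ℝ} (ha : 1 < a) {Ω : Type*} [MeasurableSpace Ω] {μ : Measure Ω}
    {Γ C : ℤ → Ω → Set E}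
    (hrec : ∀ n ω, Γ (n + 1) ω = (a • Γ n ω) ∩ ((a / (a - 1)) • C (n + 1) ω))
    (hprobΓ : ∀ n (c : ℝ), 0 < c →
      μ {ω | c • K ⊆ Γ n ω} = ENNReal.ofReal (Real.exp (-(c * L))))
    (hprobC : ∀ n (c : ℝ), 0 < c →
      μ {ω | c • K ⊆ C n ω} = ENNReal.ofReal (Real.exp (-(c * L))))
    (hindep : ∀ n (b c : ℝ), 0 < b → 0 < c →
      IndepSet {ω | b • K ⊆ C (n + 1) ω} {ω | c • K ⊆ Γ n ω} μ) (n : ℤ) :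
    μ ({ω | a • K ⊆ Γ n ω} ∩ {ω | K ⊆ Γ n ω} ∩ {ω | K ⊆ Γ (n - 1) ω})
      = ENNReal.ofReal (Real.exp (-((a + a⁻¹ - 2) * L)))
          * μ ({ω | K ⊆ Γ n ω} ∩ {ω | K ⊆ Γ (n - 1) ω}) := by
  obtain ⟨m, rfl⟩ : ∃ m, n = m + 1 := ⟨n - 1, (sub_add_cancel n 1).symm⟩
  have ha₀ : 0 < a := zero_lt_one.trans ha
  have hb : 0 < a / (a - 1) := div_pos ha₀ (sub_pos.2 ha)
  have haK : K ⊆ a • K := subset_smul_of_starConvex_zero hK ha.le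
  have hΓm : μ {ω | K ⊆ Γ m ω} = ENNReal.ofReal (Real.exp (-L)) := by
    simpa only [one_smul, one_mul] using hprobΓ m 1 one_pos
  have hCΓ : IndepSet {ω | (a / (a - 1))⁻¹ • K ⊆ C (m + 1) ω} {ω | K ⊆ Γ m ω} μ := by
    simpa only [one_smul] using hindep m (a / (a - 1))⁻¹ 1 (inv_pos.2 hb) one_pos
  have hΓa : ∀ ω, Γ (m + 1) ω ⊆ a • Γ m ω := fun ω =>
    (hrec m ω).subset.trans Set.inter_subset_left
  rw [add_sub_cancel_right, setOf_smul_subset_inter_setOf_subset_eq ha₀.ne' haK hΓa,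
    measure_setOf_subset_inter_setOf_subset hb.ne' haK (hrec m) hCΓ, hprobΓ _ a ha₀,
    hprobC _ _ (inv_pos.2 hb), hΓm, ofReal_exp_neg_mul_eq_mul_mul ha₀.ne']

/-- Under the hypotheses of the context, for every `n ∈ ℤ`,
`μ ({a•K ⊆ Γ n} ∩ {K ⊆ Γ n} ∩ {K ⊆ Γ (n-1)})
  = exp (-(a + a⁻¹ - 2)·L) · μ ({K ⊆ Γ n} ∩ {K ⊆ Γ (n-1)})`;
that is, `P(a•K ⊆ Γ n | K ⊆ Γ n and K ⊆ Γ (n-1)) = exp (-(a + a⁻¹ - 2)·L)`. -/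
theorem stmt10 {ℓ : ℕ} (hℓ : 1 ≤ ℓ) (K : Set (EuclideanSpace ℝ (Fin ℓ)))
    (hKcomp : IsCompact K) (hKconv : Convex ℝ K)
    (hK0 : (0 : EuclideanSpace ℝ (Fin ℓ)) ∈ interior K)
    (L a : ℝ) (hL : 0 < L) (ha : 1 < a)
    {Ω : Type*} [MeasurableSpace Ω] (μ : Measure Ω) [IsProbabilityMeasure μ]
    (Γ C : ℤ → Ω → Set (EuclideanSpace ℝ (Fin ℓ)))
    (hrec : ∀ (n : ℤ) (ω : Ω), Γ (n + 1) ω = (a • Γ n ω) ∩ ((a / (a - 1)) • C (n + 1) ω))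
    (hmeasΓ : ∀ (n : ℤ) (c : ℝ), 0 < c → MeasurableSet {ω | c • K ⊆ Γ n ω})
    (hmeasC : ∀ (n : ℤ) (c : ℝ), 0 < c → MeasurableSet {ω | c • K ⊆ C n ω})
    (hprobΓ : ∀ (n : ℤ) (c : ℝ), 0 < c →
      μ {ω | c • K ⊆ Γ n ω} = ENNReal.ofReal (Real.exp (-(c * L))))
    (hprobC : ∀ (n : ℤ) (c : ℝ), 0 < c →
      μ {ω | c • K ⊆ C n ω} = ENNReal.ofReal (Real.exp (-(c * L))))
    (hindep : ∀ n : ℤ,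
      Indep
        (MeasurableSpace.generateFrom {s | ∃ c : ℝ, 0 < c ∧ s = {ω | c • K ⊆ C (n + 1) ω}})
        (MeasurableSpace.generateFrom {s | ∃ m : ℤ, m ≤ n ∧ ∃ c : ℝ, 0 < c ∧
          (s = {ω | c • K ⊆ Γ m ω} ∨ s = {ω | c • K ⊆ C m ω})}) μ) :
    ∀ n : ℤ,
      μ ({ω | a • K ⊆ Γ n ω} ∩ {ω | K ⊆ Γ n ω} ∩ {ω | K ⊆ Γ (n - 1) ω})
        = ENNReal.ofReal (Real.exp (-((a + a⁻¹ - 2) * L)))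
            * μ ({ω | K ⊆ Γ n ω} ∩ {ω | K ⊆ Γ (n - 1) ω}) :=
  stmt10_general (hKconv.starConvex (interior_subset hK0)) ha hrec hprobΓ hprobC
    fun n b c hb hc =>
      indepSet_of_indep_generateFrom (hindep n) ⟨b, hb, rfl⟩ ⟨n, le_rfl, c, hc, Or.inl rfl⟩
end

section
/- Under the hypotheses of the context, let α < β and α_1 ≤ β_1 < α_2 ≤ β_2 < ... < α_l ≤ β_l be integers with α < α_1, β_l < β, α_t < β_t, and β_t < α_{t+1} − 1 for t = 1,...,l−1. Set I_t = [α_t, β_t] ∩ ℤ, I = ⋃_{t=1}^l I_t, I^0 = [α, β] ∩ ℤ, Ĩ_t = [α_t + 1, β_t] ∩ ℤ, Ĩ = ⋃_{t=1}^l Ĩ_t, and let J ⊆ Ĩ. Let D = (⋂_{i∈I} {K ⊆ Γ_i}) ∩ (⋂_{i∈I^0\I} {K ⊆ Γ_i}ᶜ) and assume μ(D) > 0. Then μ((⋂_{j∈J} {a•K ⊆ Γ_j}) ∩ (⋂_{j∈Ĩ\J} {a•K ⊆ Γ_j}ᶜ) ∩ D) = exp(−(a + a^{−1} − 2)·|J|·L)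 · (1 − exp(−(a + a^{−1} − 2)·L))^{|Ĩ\J|} · μ(D); that is, conditionally on the pattern of the events {K ⊆ Γ_i}, i ∈ I^0, the indicators of {a•K ⊆ Γ_j} at the eligible positions j ∈ Ĩ are i.i.d. Bernoulli with success probability exp(−(a + a^{−1} − 2)·L). -/
open MeasureTheory ProbabilityTheory Pointwise

/-!
Let `S ⊆ T` be events of the past of time `n`, `T` prescribing the pattern of `{K ⊆ Γ i}` and `S`
also that of `{a • K ⊆ Γ j}`, for indices up to `n`. The invariant is `μ (S ∩ B) = p * μ (T ∩ B)`
for `B = Ω` and for all `B = {c • K ⊆ Γ n}` with `0 < c ≤ 1`.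

* Passing from `n` to `n + 1` preserves it, since `{c • K ⊆ Γ (n + 1)}` is the intersection of
  `{(c / a) • K ⊆ Γ n}`, which is again one of the sets `B` as `c / a ≤ 1`, with an event
  independent of the past.
* Every `B` contains `{K ⊆ Γ n}`, so prescribing whether `K ⊆ Γ n` preserves it as well.
* If `K ⊆ Γ n` on `T`, then on `T` the events `{K ⊆ Γ (n + 1)}` and `{a • K ⊆ Γ (n + 1)}` are
  `{((a - 1) / a) • K ⊆ C (n + 1)}` and `{(a - 1) • K ⊆ C (n + 1)}`. The second has conditional
  probability `q = exp (-(a - 1) L) / exp (-(a - 1) L / a) = exp (-(a + a⁻¹ - 2) L)` given the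
  first, so each eligible position multiplies `p` by `q` or by `1 - q`.
-/

open scoped ENNReal

theorem card_filter_le_add_one (T : Finset ℤ) (n : ℤ) :
    (T.filter (· ≤ n + 1)).card = (T.filter (· ≤ n)).card + if n + 1 ∈ T then 1 else 0 := by
  simp only [Finset.card_filter, Int.le_add_one_iff]
  rw [← Finset.sum_ite_eq' T (n + 1) fun _ => 1, ← Finset.sum_add_distrib]
  refine Finset.sum_congr rfl fun i _ => ?_
  split_ifs <;> omega

theorem ofReal_pow_mul_one_sub_pow {q : ℝ} (hq₀ : 0 ≤ q) (hq₁ : q ≤ 1) (k m : ℕ) :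
    ENNReal.ofReal (q ^ k * (1 - q) ^ m) =
      ENNReal.ofReal q ^ k * (1 - ENNReal.ofReal q) ^ m := by
  rw [ENNReal.ofReal_mul (pow_nonneg hq₀ k), ENNReal.ofReal_pow hq₀,
    ENNReal.ofReal_pow (sub_nonneg.2 hq₁), ENNReal.ofReal_sub 1 hq₀, ENNReal.ofReal_one]

theorem measure_sdiff_eq_sub_measure_inter {Ω : Type*} [MeasurableSpace Ω] {μ : Measure Ω}
    [IsFiniteMeasure μ] (s : Set Ω) {t : Set Ω} (ht : MeasurableSet t) :
    μ (s \ t) = μ s - μ (s ∩ t) :=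
  ENNReal.eq_sub_of_add_eq (measure_ne_top μ _) (measure_sdiff_add_inter s ht)

section Pattern

variable {Ω : Type*} {A : Set Ω} {P N : Prop}

/-- The event that `A` occurs if `P` holds and fails to occur if `N` holds. -/
def prescribed (A : Set Ω) (P N : Prop) : Set Ω :=
  {ω | (P → ω ∈ A) ∧ (N → ω ∉ A)}

theorem prescribed_subset (hP : P) (N : Prop) : prescribed A P N ⊆ A :=
  fun _ hω => hω.1 hP

theorem prescribed_eq_self (hP : P) (hN : ¬N) : prescribed A P N = A :=
  (prescribed_subset hP N).antisymm fun _ hω => ⟨fun _ => hω, fun h => absurd h hN⟩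

theorem prescribed_eq_compl (hP : ¬P) (hN : N) : prescribed A P N = Aᶜ :=
  Set.Subset.antisymm (fun _ hω => hω.2 hN) fun _ hω => ⟨fun h => absurd h hP, fun _ => hω⟩

theorem prescribed_eq_univ (hP : ¬P) (hN : ¬N) : prescribed A P N = Set.univ :=
  Set.eq_univ_of_forall fun _ => ⟨fun h => absurd h hP, fun h => absurd h hN⟩

theorem prescribed_eq_empty (hP : P) (hN : N) : prescribed A P N = ∅ :=
  Set.eq_empty_of_forall_notMem fun _ hω => hω.2 hN (hω.1 hP)

theorem measurableSet_prescribed {_ : MeasurableSpace Ω} (hA : MeasurableSet A)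
    (P N : Prop) : MeasurableSet (prescribed A P N) :=
  ((MeasurableSet.const P).imp hA).inter ((MeasurableSet.const N).imp hA.compl)

/-- The event that, among the events `G i` with `i ≤ n`, those with `i ∈ P` occur and those with
`i ∈ N` do not. -/
def patternUpTo (G : ℤ → Set Ω) (P N : Finset ℤ) (n : ℤ) : Set Ω :=
  ⋂ i ≤ n, prescribed (G i) (i ∈ P) (i ∈ N)

theorem patternUpTo_add_one (G : ℤ → Set Ω) (P N : Finset ℤ) (n : ℤ) :
    patternUpTo G P N (n + 1) =
      patternUpTo G P N n ∩ prescribed (G (n + 1)) (n + 1 ∈ P) (n + 1 ∈ N) := by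
  simp only [patternUpTo, Int.le_add_one_iff, Set.iInter_or, Set.iInter_inter_distrib,
    Set.iInter_iInter_eq_left]

variable {P N : Finset ℤ} {n : ℤ}

theorem patternUpTo_eq_univ (G : ℤ → Set Ω) (h : ∀ i ∈ P ∪ N, n < i) :
    patternUpTo G P N n = Set.univ := by
  refine Set.iInter_eq_univ.2 fun i => Set.iInter_eq_univ.2 fun hi => prescribed_eq_univ ?_ ?_
  · exact fun hP => hi.not_gt (h i (Finset.mem_union_left N hP))
  · exact fun hN => hi.not_gt (h i (Finset.mem_union_right P hN))

theorem patternUpTo_eq_biInter (G : ℤ → Set Ω) (h : ∀ i ∈ P ∪ N, i ≤ n) :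
    patternUpTo G P N n = (⋂ i ∈ P, G i) ∩ ⋂ i ∈ N, (G i)ᶜ := by
  simp only [Finset.mem_union] at h
  ext ω
  simp only [patternUpTo, prescribed, Set.mem_iInter, Set.mem_ofPred_eq, Set.mem_inter_iff,
    Set.mem_compl_iff]
  grind

theorem patternUpTo_subset (G : ℤ → Set Ω) {i : ℤ} (hi : i ∈ P) (N : Finset ℤ) (hin : i ≤ n) :
    patternUpTo G P N n ⊆ G i :=
  (Set.iInter₂_subset i hin).trans (prescribed_subset hi _)

theorem measurableSet_patternUpTo {_ : MeasurableSpace Ω} {G : ℤ → Set Ω}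
    (hG : ∀ i ≤ n, MeasurableSet (G i)) (P N : Finset ℤ) :
    MeasurableSet (patternUpTo G P N n) :=
  .iInter fun i => .iInter fun hi => measurableSet_prescribed (hG i hi) _ _

end Pattern

section Dilate

variable {E Ω : Type*} [AddCommGroup E] [Module ℝ E] {K : Set E} {X : Ω → Set E} {b c d : ℝ}

/-- The event `{c • K ⊆ X}` that the random set `X` contains the dilate `c • K`. -/
def dilateEvent (K : Set E) (X : Ω → Set E) (c : ℝ) : Set Ω :=
  {ω | c • K ⊆ X ω}

theorem smul_subset_smul_of_starConvex (hK : StarConvex ℝ 0 K) (hc : 0 ≤ c) (hcd : c ≤ d) :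
    c • K ⊆ d • K := by
  rintro _ ⟨x, hx, rfl⟩
  refine ⟨(c / d) • x, hK.smul_mem hx (div_nonneg hc (hc.trans hcd))
    (div_le_one_of_le₀ hcd (hc.trans hcd)), ?_⟩
  rcases eq_or_ne d 0 with rfl | hd
  · simp [le_antisymm hcd hc]
  · exact (smul_smul _ _ _).trans (by rw [mul_div_cancel₀ c hd])

theorem dilateEvent_subset (hK : StarConvex ℝ 0 K) (X : Ω → Set E) (hc : 0 ≤ c) (hcd : c ≤ d) :
    dilateEvent K X d ⊆ dilateEvent K X c :=
  fun _ hω => (smul_subset_smul_of_starConvex hK hc hcd).trans hω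

theorem dilateEvent_inter (K : Set E) (X Y : Ω → Set E) (c : ℝ) :
    dilateEvent K (fun ω => X ω ∩ Y ω) c = dilateEvent K X c ∩ dilateEvent K Y c :=
  Set.ext fun _ => Set.subset_inter_iff

theorem dilateEvent_smul (K : Set E) (X : Ω → Set E) (hb : b ≠ 0) (c : ℝ) :
    dilateEvent K (fun ω => b • X ω) c = dilateEvent K X (c / b) := by
  ext ω
  simp only [dilateEvent, Set.mem_ofPred_eq]
  rw [Set.subset_smul_set_iff₀ hb, smul_smul, inv_mul_eq_div]

end Dilate

section LevelProportional

variable {E Ω : Type*} [AddCommGroup E] [Module ℝ E] {K : Set E} {X : Ω → Set E}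

/-- The certain event together with the events `{c • K ⊆ X}` for `0 < c ≤ 1`. -/
def dilateLevels (K : Set E) (X : Ω → Set E) : Set (Set Ω) :=
  insert Set.univ (dilateEvent K X '' Set.Ioc 0 1)

theorem dilateEvent_one_subset_of_mem_dilateLevels (hK : StarConvex ℝ 0 K) {B : Set Ω}
    (hB : B ∈ dilateLevels K X) : dilateEvent K X 1 ⊆ B := by
  rcases hB with rfl | ⟨c, hc, rfl⟩
  · exact Set.subset_univ _
  · exact dilateEvent_subset hK X hc.1.le hc.2

theorem dilateEvent_mem_dilateLevels (K : Set E) (X : Ω → Set E) {c : ℝ} (hc : c ∈ Set.Ioc 0 1) :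
    dilateEvent K X c ∈ dilateLevels K X :=
  .inr ⟨c, hc, rfl⟩

variable [MeasurableSpace Ω] {μ : Measure Ω} {p : ℝ≥0∞} {S T : Set Ω}

/-- On the dilate levels of `X`, restricting `μ` to `S` has the same effect as restricting it to
`T` and multiplying by `p`. For `S ⊆ T` this says that, given `T`, the event `S` has probability
`p` and is independent of each level. -/
def LevelProportional (μ : Measure Ω) (K : Set E) (X : Ω → Set E) (p : ℝ≥0∞) (S T : Set Ω) :
    Prop :=
  ∀ B ∈ dilateLevels K X, μ (S ∩ B) = p * μ (T ∩ B)

theorem levelProportional_of_subset (hK : StarConvex ℝ 0 K) (hS : S ⊆ dilateEvent K X 1)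
    (hT : T ⊆ dilateEvent K X 1) (h : μ S = p * μ T) : LevelProportional μ K X p S T := by
  intro B hB
  have hXB := dilateEvent_one_subset_of_mem_dilateLevels hK hB
  rwa [Set.inter_eq_left.2 (hS.trans hXB), Set.inter_eq_left.2 (hT.trans hXB)]

namespace LevelProportional

theorem measure_eq (h : LevelProportional μ K X p S T) : μ S = p * μ T := by
  simpa only [Set.inter_univ] using h Set.univ (.inl rfl)

theorem measure_inter_dilateEvent (h : LevelProportional μ K X p S T) {c : ℝ}
    (hc : c ∈ Set.Ioc 0 1) :
    μ (S ∩ dilateEvent K X c) = p * μ (T ∩ dilateEvent K X c) :=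
  h _ (dilateEvent_mem_dilateLevels K X hc)

theorem inter_dilateEvent_one (h : LevelProportional μ K X p S T) (hK : StarConvex ℝ 0 K) :
    LevelProportional μ K X p (S ∩ dilateEvent K X 1) (T ∩ dilateEvent K X 1) :=
  levelProportional_of_subset hK Set.inter_subset_right Set.inter_subset_right
    (h.measure_inter_dilateEvent ⟨one_pos, le_rfl⟩)

theorem sdiff_dilateEvent_one [IsFiniteMeasure μ] (h : LevelProportional μ K X p S T)
    (hK : StarConvex ℝ 0 K) (hX : MeasurableSet (dilateEvent K X 1)) :
    LevelProportional μ K X p (S \ dilateEvent K X 1) (T \ dilateEvent K X 1) := by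
  intro B hB
  have measure_sdiff_inter (U : Set Ω) :
      μ ((U \ dilateEvent K X 1) ∩ B) = μ (U ∩ B) - μ (U ∩ dilateEvent K X 1) := by
    rw [← Set.inter_sdiff_right_comm, measure_sdiff_eq_sub_measure_inter _ hX, Set.inter_assoc,
      Set.inter_eq_right.2 (dilateEvent_one_subset_of_mem_dilateLevels hK hB)]
  have p_ne_top (hlt : μ (T ∩ dilateEvent K X 1) < μ (T ∩ B)) : p ≠ ∞ :=
    (ENNReal.lt_top_of_mul_ne_top_left (h B hB ▸ measure_ne_top μ _) hlt.ne_bot).ne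
  rw [measure_sdiff_inter, measure_sdiff_inter, ENNReal.mul_sub fun _ => p_ne_top, h B hB,
    h.measure_inter_dilateEvent ⟨one_pos, le_rfl⟩]

theorem inter_prescribed [IsFiniteMeasure μ] (h : LevelProportional μ K X p S T)
    (hK : StarConvex ℝ 0 K) (hX : MeasurableSet (dilateEvent K X 1)) (P N : Prop) :
    LevelProportional μ K X p (S ∩ prescribed (dilateEvent K X 1) P N)
      (T ∩ prescribed (dilateEvent K X 1) P N) := by
  by_cases hP : P <;> by_cases hN : N
  · simp only [prescribed_eq_empty hP hN, Set.inter_empty]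
    exact levelProportional_of_subset hK (Set.empty_subset _) (Set.empty_subset _) (by simp)
  · simpa only [prescribed_eq_self hP hN] using h.inter_dilateEvent_one hK
  · simpa only [prescribed_eq_compl hP hN, ← Set.sdiff_eq] using h.sdiff_dilateEvent_one hK hX
  · simpa only [prescribed_eq_univ hP hN, Set.inter_univ] using h

end LevelProportional

end LevelProportional

section Chain

variable {E Ω : Type*} [AddCommGroup E] [Module ℝ E] {mΩ : MeasurableSpace Ω} {μ : Measure Ω}
  {K : Set E} {a : ℝ} {F : ℝ → ℝ≥0∞} {𝓕 : Filtration ℤ mΩ} {Γ C : ℤ → Ω → Set E}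

/-- A zero cell chain: random sets with `Γ (n + 1) = a • Γ n ∩ (a / (a - 1)) • C (n + 1)`, observed
through the dilates of a star-shaped `K`. The events `{c • K ⊆ Γ n}` are adapted to `𝓕`, and
`{c • K ⊆ C (n + 1)}` has probability `F c` independently of `𝓕 n`. For renormalized tessellation
processes, `F c = exp (-c * Λ([K]))`. -/
structure IsZeroCellChain (μ : Measure Ω) (K : Set E) (a : ℝ) (F : ℝ → ℝ≥0∞)
    (𝓕 : Filtration ℤ mΩ) (Γ C : ℤ → Ω → Set E) : Prop where
  one_lt : 1 < a
  starConvex : StarConvex ℝ 0 K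
  add_one_eq : ∀ n ω, Γ (n + 1) ω = (a • Γ n ω) ∩ ((a / (a - 1)) • C (n + 1) ω)
  measurableSet_filtration : ∀ n c, 0 < c → MeasurableSet[𝓕 n] (dilateEvent K (Γ n) c)
  measure_inter : ∀ n c S, 0 < c → MeasurableSet[𝓕 n] S →
    μ (S ∩ dilateEvent K (C (n + 1)) c) = F c * μ S

/-- The history of the events `{c • K ⊆ Γ n}` and `{c • K ⊆ C n}` with `c > 0`. -/
def dilateFiltration (K : Set E) (Γ C : ℤ → Ω → Set E)
    (hΓ : ∀ (n : ℤ) (c : ℝ), 0 < c → MeasurableSet (dilateEvent K (Γ n) c))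
    (hC : ∀ (n : ℤ) (c : ℝ), 0 < c → MeasurableSet (dilateEvent K (C n) c)) :
    Filtration ℤ mΩ where
  seq n := MeasurableSpace.generateFrom {s | ∃ m : ℤ, m ≤ n ∧ ∃ c : ℝ, 0 < c ∧
    (s = dilateEvent K (Γ m) c ∨ s = dilateEvent K (C m) c)}
  mono' _ _ hmn := MeasurableSpace.generateFrom_mono fun _ ⟨i, him, hs⟩ => ⟨i, him.trans hmn, hs⟩
  le' _ := MeasurableSpace.generateFrom_le <| by
    rintro _ ⟨m, -, c, hc, rfl | rfl⟩
    exacts [hΓ m c hc, hC m c hc]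

theorem isZeroCellChain_of_indep (ha : 1 < a) (hK : StarConvex ℝ 0 K)
    (hΓC : ∀ n ω, Γ (n + 1) ω = (a • Γ n ω) ∩ ((a / (a - 1)) • C (n + 1) ω))
    (hΓ : ∀ n c, 0 < c → MeasurableSet (dilateEvent K (Γ n) c))
    (hC : ∀ n c, 0 < c → MeasurableSet (dilateEvent K (C n) c))
    (hF : ∀ n c, 0 < c → μ (dilateEvent K (C n) c) = F c)
    (hindep : ∀ n : ℤ, Indep
      (MeasurableSpace.generateFrom {s | ∃ c : ℝ, 0 < c ∧ s = dilateEvent K (C (n + 1)) c})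
      (dilateFiltration K Γ C hΓ hC n) μ) :
    IsZeroCellChain μ K a F (dilateFiltration K Γ C hΓ hC) Γ C where
  one_lt := ha
  starConvex := hK
  add_one_eq := hΓC
  measurableSet_filtration n c hc :=
    MeasurableSpace.measurableSet_generateFrom ⟨n, le_rfl, c, hc, .inl rfl⟩
  measure_inter n c S hc hS := by
    rw [Set.inter_comm, (Indep_iff _ _ μ).1 (hindep n) _ S
      (MeasurableSpace.measurableSet_generateFrom ⟨c, hc, rfl⟩) hS, hF (n + 1) c hc]

namespace IsZeroCellChain

theorem pos (h : IsZeroCellChain μ K a F 𝓕 Γ C) : 0 < a :=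
  one_pos.trans h.one_lt

theorem measurableSet (h : IsZeroCellChain μ K a F 𝓕 Γ C) (n : ℤ) {c : ℝ} (hc : 0 < c) :
    MeasurableSet (dilateEvent K (Γ n) c) :=
  𝓕.le n _ (h.measurableSet_filtration n c hc)

theorem measurableSet_patternUpTo (h : IsZeroCellChain μ K a F 𝓕 Γ C) {c : ℝ} (hc : 0 < c)
    (P N : Finset ℤ) (n : ℤ) :
    MeasurableSet[𝓕 n] (patternUpTo (fun i => dilateEvent K (Γ i) c) P N n) :=
  _root_.measurableSet_patternUpTo
    (fun i hi => 𝓕.mono hi _ (h.measurableSet_filtration i c hc)) P N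

theorem dilateEvent_add_one (h : IsZeroCellChain μ K a F 𝓕 Γ C) (n : ℤ) (c : ℝ) :
    dilateEvent K (Γ (n + 1)) c =
      dilateEvent K (Γ n) (c / a) ∩ dilateEvent K (C (n + 1)) (c * ((a - 1) / a)) := by
  have ha : a ≠ 0 := h.pos.ne'
  have ha' : a / (a - 1) ≠ 0 := div_ne_zero ha (sub_pos.2 h.one_lt).ne'
  rw [funext (h.add_one_eq n), dilateEvent_inter, dilateEvent_smul _ _ ha,
    dilateEvent_smul _ _ ha', div_div_eq_mul_div, mul_div_assoc]

theorem measure_inter_dilateEvent_add_one (h : IsZeroCellChain μ K a F 𝓕 Γ C) {n : ℤ}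
    {S : Set Ω} (hS : MeasurableSet[𝓕 n] S) {c : ℝ} (hc : 0 < c) :
    μ (S ∩ dilateEvent K (Γ (n + 1)) c) =
      F (c * ((a - 1) / a)) * μ (S ∩ dilateEvent K (Γ n) (c / a)) := by
  rw [h.dilateEvent_add_one, ← Set.inter_assoc]
  exact h.measure_inter n _ _ (mul_pos hc (div_pos (sub_pos.2 h.one_lt) h.pos))
    (hS.inter (h.measurableSet_filtration n _ (div_pos hc h.pos)))

theorem measure_inter_dilateEvent_add_one_of_subset (h : IsZeroCellChain μ K a F 𝓕 Γ C) {n : ℤ}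
    {S : Set Ω} (hS : MeasurableSet[𝓕 n] S) (hSn : S ⊆ dilateEvent K (Γ n) 1) {c : ℝ}
    (hc : c ∈ Set.Ioc 0 a) :
    μ (S ∩ dilateEvent K (Γ (n + 1)) c) = F (c * ((a - 1) / a)) * μ S := by
  have hSc : S ⊆ dilateEvent K (Γ n) (c / a) := hSn.trans <|
    dilateEvent_subset h.starConvex _ (div_pos hc.1 h.pos).le ((div_le_one h.pos).2 hc.2)
  rw [h.measure_inter_dilateEvent_add_one hS hc.1, Set.inter_eq_left.2 hSc]

variable {n : ℤ} {p q : ℝ≥0∞} {S T : Set Ω}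

theorem levelProportional_add_one (h : IsZeroCellChain μ K a F 𝓕 Γ C)
    (hS : MeasurableSet[𝓕 n] S) (hT : MeasurableSet[𝓕 n] T)
    (hST : LevelProportional μ K (Γ n) p S T) : LevelProportional μ K (Γ (n + 1)) p S T := by
  rintro B (rfl | ⟨c, ⟨hc₀, hc₁⟩, rfl⟩)
  · exact hST Set.univ (.inl rfl)
  · have hca : c / a ∈ Set.Ioc 0 1 :=
      ⟨div_pos hc₀ h.pos, (div_le_one h.pos).2 (hc₁.trans h.one_lt.le)⟩
    rw [h.measure_inter_dilateEvent_add_one hS hc₀, h.measure_inter_dilateEvent_add_one hT hc₀,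
      hST.measure_inter_dilateEvent hca, mul_left_comm]

theorem levelProportional_add_one_inter (h : IsZeroCellChain μ K a F 𝓕 Γ C)
    (hq : F (a - 1) = q * F ((a - 1) / a))
    (hS : MeasurableSet[𝓕 n] S) (hT : MeasurableSet[𝓕 n] T)
    (hSn : S ⊆ dilateEvent K (Γ n) 1) (hTn : T ⊆ dilateEvent K (Γ n) 1) (hST : μ S = p * μ T) :
    LevelProportional μ K (Γ (n + 1)) (q * p)
      (S ∩ dilateEvent K (Γ (n + 1)) a) (T ∩ dilateEvent K (Γ (n + 1)) 1) := by
  refine levelProportional_of_subset h.starConvex (Set.inter_subset_right.trans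
    (dilateEvent_subset h.starConvex _ zero_le_one h.one_lt.le)) Set.inter_subset_right ?_
  calc μ (S ∩ dilateEvent K (Γ (n + 1)) a)
      = F (a - 1) * μ S := by
        rw [h.measure_inter_dilateEvent_add_one_of_subset hS hSn ⟨h.pos, le_rfl⟩,
          mul_div_cancel₀ _ h.pos.ne']
    _ = q * p * (F ((a - 1) / a) * μ T) := by rw [hq, hST]; ring
    _ = q * p * μ (T ∩ dilateEvent K (Γ (n + 1)) 1) := by
        rw [h.measure_inter_dilateEvent_add_one_of_subset hT hTn ⟨one_pos, h.one_lt.le⟩, one_mul]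

theorem levelProportional_add_one_sdiff [IsFiniteMeasure μ] (h : IsZeroCellChain μ K a F 𝓕 Γ C)
    (hq : F (a - 1) = q * F ((a - 1) / a))
    (hS : MeasurableSet[𝓕 n] S) (hT : MeasurableSet[𝓕 n] T)
    (hSn : S ⊆ dilateEvent K (Γ n) 1) (hTn : T ⊆ dilateEvent K (Γ n) 1)
    (hST : LevelProportional μ K (Γ n) p S T) :
    LevelProportional μ K (Γ (n + 1)) ((1 - q) * p)
      ((S ∩ dilateEvent K (Γ (n + 1)) 1) \ dilateEvent K (Γ (n + 1)) a)
      (T ∩ dilateEvent K (Γ (n + 1)) 1) := by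
  refine levelProportional_of_subset h.starConvex
    (Set.sdiff_subset.trans Set.inter_subset_right) Set.inter_subset_right ?_
  have h_one : μ (S ∩ dilateEvent K (Γ (n + 1)) 1) = p * μ (T ∩ dilateEvent K (Γ (n + 1)) 1) :=
    (h.levelProportional_add_one hS hT hST).measure_inter_dilateEvent ⟨one_pos, le_rfl⟩
  have h_a : μ (S ∩ dilateEvent K (Γ (n + 1)) a) =
      q * p * μ (T ∩ dilateEvent K (Γ (n + 1)) 1) :=
    (h.levelProportional_add_one_inter hq hS hT hSn hTn hST.measure_eq).measure_eq
  rw [measure_sdiff_eq_sub_measure_inter _ (h.measurableSet _ h.pos), Set.inter_assoc,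
    Set.inter_eq_right.2 (dilateEvent_subset h.starConvex _ zero_le_one h.one_lt.le), h_a,
    mul_assoc, mul_assoc, ENNReal.sub_mul fun _ _ => h_one ▸ measure_ne_top μ _, one_mul, h_one]

theorem levelProportional_add_one_prescribed [IsFiniteMeasure μ]
    (h : IsZeroCellChain μ K a F 𝓕 Γ C) (hq : F (a - 1) = q * F ((a - 1) / a))
    (hS : MeasurableSet[𝓕 n] S) (hT : MeasurableSet[𝓕 n] T)
    (hST : LevelProportional μ K (Γ n) p S T) {P N P' N' : Prop} [Decidable P'] [Decidable N']
    (hP'N' : ¬(P' ∧ N')) (hPST : P' ∨ N' → P ∧ S ⊆ dilateEvent K (Γ n) 1 ∧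
      T ⊆ dilateEvent K (Γ n) 1) :
    LevelProportional μ K (Γ (n + 1))
      (q ^ (if P' then 1 else 0) * (1 - q) ^ (if N' then 1 else 0) * p)
      (S ∩ prescribed (dilateEvent K (Γ (n + 1)) a) P' N' ∩
        prescribed (dilateEvent K (Γ (n + 1)) 1) P N)
      (T ∩ prescribed (dilateEvent K (Γ (n + 1)) 1) P N) := by
  have h_meas : MeasurableSet (dilateEvent K (Γ (n + 1)) 1) := h.measurableSet _ one_pos
  have inter_inter (hP : P) (U : Set Ω) :
      U ∩ dilateEvent K (Γ (n + 1)) 1 ∩ prescribed (dilateEvent K (Γ (n + 1)) 1) P N =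
        U ∩ prescribed (dilateEvent K (Γ (n + 1)) 1) P N := by
    rw [Set.inter_assoc, Set.inter_eq_right.2 (prescribed_subset hP N)]
  by_cases hP' : P'
  · obtain ⟨hP, hSn, hTn⟩ := hPST (.inl hP')
    have hN' : ¬N' := fun hN' => hP'N' ⟨hP', hN'⟩
    have key := (h.levelProportional_add_one_inter hq hS hT hSn hTn hST.measure_eq).inter_prescribed
      h.starConvex h_meas P N
    rw [inter_inter hP] at key
    simpa only [prescribed_eq_self hP' hN', if_pos hP', if_neg hN', pow_one, pow_zero, mul_one]
      using key
  by_cases hN' : N'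
  · obtain ⟨hP, hSn, hTn⟩ := hPST (.inr hN')
    have key := (h.levelProportional_add_one_sdiff hq hS hT hSn hTn hST).inter_prescribed
      h.starConvex h_meas P N
    rw [Set.sdiff_eq, Set.inter_right_comm S, inter_inter hP, inter_inter hP] at key
    simpa only [prescribed_eq_compl hP' hN', if_neg hP', if_pos hN', pow_one, pow_zero, one_mul]
      using key
  · have key := (h.levelProportional_add_one hS hT hST).inter_prescribed h.starConvex h_meas P N
    simpa only [prescribed_eq_univ hP' hN', if_neg hP', if_neg hN', pow_zero, one_mul,
      Set.inter_univ] using key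

theorem levelProportional_patternUpTo [IsFiniteMeasure μ] (h : IsZeroCellChain μ K a F 𝓕 Γ C)
    (hq : F (a - 1) = q * F ((a - 1) / a)) (I I' : Finset ℤ) {J J' : Finset ℤ}
    (hJJ' : Disjoint J J') (hJI : ∀ j ∈ J ∪ J', j ∈ I ∧ j - 1 ∈ I) (n : ℤ) :
    LevelProportional μ K (Γ n)
      (q ^ (J.filter (· ≤ n)).card * (1 - q) ^ (J'.filter (· ≤ n)).card)
      (patternUpTo (fun i => dilateEvent K (Γ i) a) J J' n ∩
        patternUpTo (fun i => dilateEvent K (Γ i) 1) I I' n)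
      (patternUpTo (fun i => dilateEvent K (Γ i) 1) I I' n) := by
  obtain ⟨b, hbn, hI⟩ : ∃ b ≤ n, ∀ i ∈ I ∪ I', b < i := by
    obtain ⟨b, hb⟩ := (insert n (I ∪ I')).bddBelow
    simp only [Finset.coe_insert, lowerBounds_insert, Set.mem_inter_iff, Set.mem_Iic] at hb
    exact ⟨b - 1, by lia, fun i hi => (sub_one_lt b).trans_le (hb.2 hi)⟩
  have hJ : ∀ j ∈ J ∪ J', b < j := fun j hj => hI j (Finset.mem_union_left I' (hJI j hj).1)
  induction n, hbn using Int.leInduction with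
  | base =>
    have card_eq_zero (T : Finset ℤ) (hT : T ⊆ J ∪ J') : (T.filter (· ≤ b)).card = 0 :=
      Finset.card_eq_zero.2 (Finset.filter_eq_empty_iff.2 fun i hi => (hJ i (hT hi)).not_ge)
    rw [patternUpTo_eq_univ _ hI, patternUpTo_eq_univ _ hJ,
      card_eq_zero _ Finset.subset_union_left, card_eq_zero _ Finset.subset_union_right]
    intro B _
    simp only [pow_zero, Set.univ_inter, one_mul]
  | succ n _ ih =>
    have hT := h.measurableSet_patternUpTo one_pos I I' n
    have hS := (h.measurableSet_patternUpTo h.pos J J' n).inter hT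
    have key := h.levelProportional_add_one_prescribed hq hS hT ih
      (P := n + 1 ∈ I) (N := n + 1 ∈ I') (P' := n + 1 ∈ J) (N' := n + 1 ∈ J')
      (fun hj => Finset.disjoint_left.1 hJJ' hj.1 hj.2) fun hj => by
        obtain ⟨hI₁, hI₀⟩ := hJI (n + 1) (Finset.mem_union.2 hj)
        have hTn := patternUpTo_subset (fun i => dilateEvent K (Γ i) 1)
          (add_sub_cancel_right n 1 ▸ hI₀) I' le_rfl
        exact ⟨hI₁, Set.inter_subset_right.trans hTn, hTn⟩
    simp only [patternUpTo_add_one, card_filter_le_add_one, pow_add]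
    convert key using 1
    · ring
    · simp only [Set.inter_assoc, Set.inter_left_comm]

end IsZeroCellChain

end Chain

theorem ofReal_exp_neg_sub_one_mul {a : ℝ} (ha : a ≠ 0) (L : ℝ) :
    ENNReal.ofReal (Real.exp (-((a - 1) * L))) =
      ENNReal.ofReal (Real.exp (-((a + a⁻¹ - 2) * L))) *
        ENNReal.ofReal (Real.exp (-((a - 1) / a * L))) := by
  rw [← ENNReal.ofReal_mul (Real.exp_nonneg _), ← Real.exp_add]
  congr 2
  field_simp
  ring

theorem add_inv_sub_two_nonneg {a : ℝ} (ha : 0 < a) : 0 ≤ a + a⁻¹ - 2 := by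
  have : a + a⁻¹ - 2 = (a - 1) ^ 2 / a := by field_simp; ring
  rw [this]
  positivity

theorem ofReal_exp_neg_mul_one_sub_exp_neg_pow {x L : ℝ} (hxL : 0 ≤ x * L) (k m : ℕ) :
    ENNReal.ofReal (Real.exp (-(x * k * L)) * (1 - Real.exp (-(x * L))) ^ m) =
      ENNReal.ofReal (Real.exp (-(x * L))) ^ k *
        (1 - ENNReal.ofReal (Real.exp (-(x * L)))) ^ m := by
  have exp_eq_pow : Real.exp (-(x * k * L)) = Real.exp (-(x * L)) ^ k := by
    rw [← Real.exp_nat_mul]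
    ring_nf
  rw [exp_eq_pow, ofReal_pow_mul_one_sub_pow (Real.exp_nonneg _)
    (Real.exp_le_one_iff.2 (neg_nonpos.2 hxL))]

theorem mem_and_sub_one_mem_biUnion_Icc {ι : Type*} (s : Finset ι) (x y : ι → ℤ) {j : ℤ}
    (hj : j ∈ s.biUnion fun t => Finset.Icc (x t + 1) (y t)) :
    j ∈ s.biUnion (fun t => Finset.Icc (x t) (y t)) ∧
      j - 1 ∈ s.biUnion (fun t => Finset.Icc (x t) (y t)) := by
  simp only [Finset.mem_biUnion, Finset.mem_Icc] at hj ⊢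
  obtain ⟨t, ht, hxj, hjy⟩ := hj
  exact ⟨⟨t, ht, by lia, hjy⟩, ⟨t, ht, by lia, by lia⟩⟩

theorem stmt11_general {E Ω : Type*} [AddCommGroup E] [Module ℝ E] {mΩ : MeasurableSpace Ω}
    {μ : Measure Ω} [IsFiniteMeasure μ] {K : Set E} {a : ℝ} {F : ℝ → ℝ≥0∞} {𝓕 : Filtration ℤ mΩ}
    {Γ C : ℤ → Ω → Set E} (h : IsZeroCellChain μ K a F 𝓕 Γ C) {q : ℝ≥0∞}
    (hq : F (a - 1) = q * F ((a - 1) / a)) (I I' : Finset ℤ) {J J' : Finset ℤ}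
    (hJJ' : Disjoint J J') (hJI : ∀ j ∈ J ∪ J', j ∈ I ∧ j - 1 ∈ I) :
    μ ((⋂ j ∈ J, {ω | a • K ⊆ Γ j ω}) ∩ (⋂ j ∈ J', {ω | a • K ⊆ Γ j ω}ᶜ) ∩
        ((⋂ i ∈ I, {ω | K ⊆ Γ i ω}) ∩ (⋂ i ∈ I', {ω | K ⊆ Γ i ω}ᶜ))) =
      q ^ J.card * (1 - q) ^ J'.card *
        μ ((⋂ i ∈ I, {ω | K ⊆ Γ i ω}) ∩ (⋂ i ∈ I', {ω | K ⊆ Γ i ω}ᶜ)) := by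
  obtain ⟨n, hn⟩ := (I ∪ I').bddAbove
  have hJ : ∀ j ∈ J ∪ J', j ≤ n := fun j hj => hn (Finset.mem_union_left I' (hJI j hj).1)
  have filter_eq (T : Finset ℤ) (hT : T ⊆ J ∪ J') : T.filter (· ≤ n) = T :=
    Finset.filter_true_of_mem fun j hj => hJ j (hT hj)
  have key := (h.levelProportional_patternUpTo hq I I' hJJ' hJI n).measure_eq
  rw [patternUpTo_eq_biInter _ hn, patternUpTo_eq_biInter _ hJ,
    filter_eq _ Finset.subset_union_left, filter_eq _ Finset.subset_union_right] at key
  simpa only [dilateEvent, one_smul] using key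

/-- Under the hypotheses of the context, let `α < β` and
`α₁ ≤ β₁ < α₂ ≤ β₂ < … < α_l ≤ β_l` be integers with `α < α₁`, `β_l < β`,
`α_t < β_t` and `β_t < α_{t+1} - 1`.  Set `I_t = [α_t, β_t] ∩ ℤ`, `I = ⋃ I_t`,
`I⁰ = [α, β] ∩ ℤ`, `Ĩ_t = [α_t + 1, β_t] ∩ ℤ`, `Ĩ = ⋃ Ĩ_t`, and let `J ⊆ Ĩ`.
Let `D = (⋂_{i∈I} {K ⊆ Γ i}) ∩ (⋂_{i∈I⁰\I} {K ⊆ Γ i}ᶜ)` and assume `μ D > 0`.  Then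
`μ ((⋂_{j∈J} {a•K ⊆ Γ j}) ∩ (⋂_{j∈Ĩ\J} {a•K ⊆ Γ j}ᶜ) ∩ D)
  = exp (-(a + a⁻¹ - 2)·|J|·L) · (1 - exp (-(a + a⁻¹ - 2)·L))^{|Ĩ\J|} · μ D`. -/
theorem stmt11 {ℓ : ℕ} (hℓ : 1 ≤ ℓ) (K : Set (EuclideanSpace ℝ (Fin ℓ)))
    (hKcomp : IsCompact K) (hKconv : Convex ℝ K)
    (hK0 : (0 : EuclideanSpace ℝ (Fin ℓ)) ∈ interior K)
    (L a : ℝ) (hL : 0 < L) (ha : 1 < a)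
    {Ω : Type*} [MeasurableSpace Ω] (μ : Measure Ω) [IsProbabilityMeasure μ]
    (Γ C : ℤ → Ω → Set (EuclideanSpace ℝ (Fin ℓ)))
    (hrec : ∀ (n : ℤ) (ω : Ω), Γ (n + 1) ω = (a • Γ n ω) ∩ ((a / (a - 1)) • C (n + 1) ω))
    (hmeasΓ : ∀ (n : ℤ) (c : ℝ), 0 < c → MeasurableSet {ω | c • K ⊆ Γ n ω})
    (hmeasC : ∀ (n : ℤ) (c : ℝ), 0 < c → MeasurableSet {ω | c • K ⊆ C n ω})
    (hprobΓ : ∀ (n : ℤ) (c : ℝ), 0 < c →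
      μ {ω | c • K ⊆ Γ n ω} = ENNReal.ofReal (Real.exp (-(c * L))))
    (hprobC : ∀ (n : ℤ) (c : ℝ), 0 < c →
      μ {ω | c • K ⊆ C n ω} = ENNReal.ofReal (Real.exp (-(c * L))))
    (hindep : ∀ n : ℤ,
      Indep
        (MeasurableSpace.generateFrom {s | ∃ c : ℝ, 0 < c ∧ s = {ω | c • K ⊆ C (n + 1) ω}})
        (MeasurableSpace.generateFrom {s | ∃ m : ℤ, m ≤ n ∧ ∃ c : ℝ, 0 < c ∧
          (s = {ω | c • K ⊆ Γ m ω} ∨ s = {ω | c • K ⊆ C m ω})}) μ)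
    -- the interval data
    (α β : ℤ) (l : ℕ) (hl : 0 < l) (αs βs : Fin l → ℤ)
    (hαβ : ∀ t, αs t < βs t)
    (hgap : ∀ (t : Fin l) (h : (t : ℕ) + 1 < l), βs t < αs ⟨(t : ℕ) + 1, h⟩ - 1)
    (hα : α < αs ⟨0, hl⟩)
    (hβ : βs ⟨l - 1, Nat.sub_lt hl Nat.one_pos⟩ < β)
    (I I0 Itil : Finset ℤ)
    (hI : I = Finset.univ.biUnion (fun t : Fin l => Finset.Icc (αs t) (βs t)))
    (hI0 : I0 = Finset.Icc α β)
    (hItil : Itil = Finset.univ.biUnion (fun t : Fin l => Finset.Icc (αs t + 1) (βs t)))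
    (J : Finset ℤ) (hJ : J ⊆ Itil)
    (D : Set Ω)
    (hD : D = (⋂ i ∈ I, {ω | K ⊆ Γ i ω}) ∩ (⋂ i ∈ I0 \ I, {ω | K ⊆ Γ i ω}ᶜ))
    (hDpos : 0 < μ D) :
    μ ((⋂ j ∈ J, {ω | a • K ⊆ Γ j ω}) ∩ (⋂ j ∈ Itil \ J, {ω | a • K ⊆ Γ j ω}ᶜ) ∩ D)
      = ENNReal.ofReal
          (Real.exp (-((a + a⁻¹ - 2) * (J.card : ℝ) * L))
            * (1 - Real.exp (-((a + a⁻¹ - 2) * L))) ^ (Itil \ J).card)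
        * μ D := by
  have ha₀ : 0 < a := one_pos.trans ha
  have hJI : ∀ j ∈ J ∪ Itil \ J, j ∈ I ∧ j - 1 ∈ I := by
    rw [Finset.union_sdiff_of_subset hJ, hI, hItil]
    exact fun j => mem_and_sub_one_mem_biUnion_Icc _ _ _
  have hchain := isZeroCellChain_of_indep ha (hKconv.starConvex (interior_subset hK0)) hrec
    hmeasΓ hmeasC hprobC hindep
  rw [ofReal_exp_neg_mul_one_sub_exp_neg_pow (mul_nonneg (add_inv_sub_two_nonneg ha₀) hL.le), hD]
  exact stmt11_general hchain (ofReal_exp_neg_sub_one_mul ha₀.ne' L) I (I0 \ I)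
    Finset.disjoint_sdiff hJI
end
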